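/- arXiv:1506.08484 — 2 statements merged into one kernel-verified Lean document; each statement's English description precedes it below -/
import Mathlib

section
/- Suppose 𝑝̃ has exactly two maximizers m₁ < m₂ on [0,1], each satisfying m_ℓ = g(τ(m_ℓ)) and 𝑝̃''(m_ℓ) < 0 (i.e. (J,h) lies on the critical line Γ). Fix ξ ∈ (m₁,m₂), set 𝒟₁ = {D ∈ 𝓓 : m(D) < ξ} and 𝒟₂ = {D ∈ 𝓓 : m(D) > ξ}, and assume liminf_{N→∞} ℙ(𝒟_ℓ) > 0 for ℓ = 1,2. Then for each ℓ ∈ {1,2}, λ_ℓ := −1/𝑝̃''(m_ℓ) − 1/(2J) > 0 and there exists a constant K (independent of N) such that for all N ≥ 1, sup_{z∈ℝ} |ℙ((|𝓜(D)| − N·m_ℓ)/N^{1/2} ≤ z | 𝒟_ℓ) − ℙ(X_ℓ ≤ z)| ≤ K/N^{1/2}, where X_ℓ is a centered Gaussian random variable with variance λ_ℓ. -/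
open Real Finset MeasureTheory

noncomputable section

/-- Dimer configurations (matchings of the complete graph on `Fin N`), encoded as
involutions of `Fin N`: fixed points are monomers, 2-cycles are dimers. -/
abbrev Dimer (N : ℕ) := {f : Fin N → Fin N // ∀ i, f (f i) = i}

/-- The set of monomers (dimer-free vertices) of a dimer configuration. -/
def monomers {N : ℕ} (D : Dimer N) : Finset (Fin N) :=
  Finset.univ.filter fun i => D.1 i = i

/-- Monomer density `m(D) = |𝓜(D)|/N`. -/
def mDim {N : ℕ} (D : Dimer N) : ℝ := ((monomers D).card : ℝ) / N

/-- The parameter `b = (log N)/2 + h - J`. -/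
def bIMD (N : ℕ) (J h : ℝ) : ℝ := Real.log N / 2 + h - J

/-- The Gibbs weight `exp(-H(D)) = exp(N (a m(D)^2 + b m(D)))` with `a = J`. -/
def wDim (N : ℕ) (J h : ℝ) (D : Dimer N) : ℝ :=
  Real.exp (N * (J * mDim D ^ 2 + bIMD N J h * mDim D))

/-- The probability of an event `A` under the IMD Gibbs measure. -/
def probDim (N : ℕ) (J h : ℝ) (A : Dimer N → Prop) : ℝ :=
  (∑ D : Dimer N, Set.indicator {D | A D} (wDim N J h) D) / ∑ D : Dimer N, wDim N J h D

/-- The conditional probability `ℙ(A | B)` under the IMD Gibbs measure. -/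
def condProbDim (N : ℕ) (J h : ℝ) (A B : Dimer N → Prop) : ℝ :=
  (∑ D : Dimer N, Set.indicator {D | A D ∧ B D} (wDim N J h) D) /
    ∑ D : Dimer N, Set.indicator {D | B D} (wDim N J h) D

/-- `g(x) = (√(e^{4x} + 4 e^{2x}) - e^{2x})/2`. -/
def gFun (x : ℝ) : ℝ := (Real.sqrt (Real.exp (4*x) + 4 * Real.exp (2*x)) - Real.exp (2*x)) / 2

/-- `τ(x) = (2x-1)J + h`. -/
def tauFun (J h x : ℝ) : ℝ := (2*x - 1) * J + h

/-- `𝑝̃(m) = -J m² - (1 - g(τ(m)) + log(1 - g(τ(m))))/2`. -/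
def ptilde (J h m : ℝ) : ℝ :=
  -J * m^2 - (1 - gFun (tauFun J h m) + Real.log (1 - gFun (tauFun J h m))) / 2

/-- The CDF of a centered Gaussian with variance `v`, evaluated at `z`. -/
def gaussCDF (v : ℝ) (z : ℝ) : ℝ :=
  (ProbabilityTheory.gaussianReal 0 (Real.toNNReal v) (Set.Iic z)).toReal

/-- Spin configurations `Σ = {0,1}^N`. -/
abbrev Config (N : ℕ) := Fin N → Bool

/-- `𝓐(σ) = {i : σ_i = 1}`. -/
def ASet {N : ℕ} (σ : Config N) : Finset (Fin N) := Finset.univ.filter fun i => σ i = true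

/-- `M(σ) = ∑ σ_i`. -/
def Msum {N : ℕ} (σ : Config N) : ℕ := (ASet σ).card

/-- Magnetization `m(σ) = M(σ)/N`. -/
def mConf {N : ℕ} (σ : Config N) : ℝ := (Msum σ : ℝ) / N

/-- `D(σ)`: the number of dimer configurations `D` with `𝓜(D) = 𝓐(σ)`. -/
def Dcount (N : ℕ) (σ : Config N) : ℕ :=
  (Finset.univ.filter fun D : Dimer N => monomers D = ASet σ).card

/-- The weight `D(σ) exp(-H(σ))` of the weighted Curie–Weiss model. -/
def wConf (N : ℕ) (J h : ℝ) (σ : Config N) : ℝ :=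
  (Dcount N σ : ℝ) * Real.exp (N * (J * mConf σ ^ 2 + bIMD N J h * mConf σ))

/-- The probability of an event `A` under the weighted Curie–Weiss Gibbs measure. -/
def probConf (N : ℕ) (J h : ℝ) (A : Config N → Prop) : ℝ :=
  (∑ σ : Config N, Set.indicator {σ | A σ} (wConf N J h) σ) / ∑ σ : Config N, wConf N J h σ

/-- Expectation under the weighted Curie–Weiss Gibbs measure. -/
def EConf (N : ℕ) (J h : ℝ) (f : Config N → ℝ) : ℝ :=
  (∑ σ : Config N, wConf N J h σ * f σ) / ∑ σ : Config N, wConf N J h σ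

/-- `L₁(m) = 2(1-m)(m² - (1-m)e^{2τ(m)})/((1-m) + e^{2τ(m)})`. -/
def Lone (J h m : ℝ) : ℝ :=
  2*(1-m)*(m^2 - (1-m)*Real.exp (2 * tauFun J h m)) / ((1-m) + Real.exp (2 * tauFun J h m))

/-- `L₂(m) = 4(1-m)(m² + (1-m)e^{2τ(m)})/((1-m) + e^{2τ(m)})`. -/
def Ltwo (J h m : ℝ) : ℝ :=
  4*(1-m)*(m^2 + (1-m)*Real.exp (2 * tauFun J h m)) / ((1-m) + Real.exp (2 * tauFun J h m))

/-- The configuration obtained from `σ` by setting the spins at `u, v` to `s, t`. -/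
def upd {N : ℕ} (σ : Config N) (u v : Fin N) (s t : Bool) : Config N :=
  fun i => if i = u then s else if i = v then t else σ i

/-- The edges of the complete graph, enumerated as ordered pairs `u < v`. -/
def cEdges (N : ℕ) : Finset (Fin N × Fin N) := Finset.univ.filter fun p => p.1 < p.2

/-- The probability of resampling the pair of spins at `(u,v)` to `(s,t)`:
the conditional distribution of `(σ_u, σ_v)` given `(σ_i)_{i ≠ u,v}`. -/
def qCond (N : ℕ) (J h : ℝ) (σ : Config N) (u v : Fin N) (s t : Bool) : ℝ :=
  wConf N J h (upd σ u v s t) / ∑ st : Bool × Bool, wConf N J h (upd σ u v st.1 st.2)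

/-- `E[F(σ, σ') | σ]` for the exchangeable pair `(σ, σ')` obtained by resampling the
spins at a uniformly chosen edge. -/
def condE2 (N : ℕ) (J h : ℝ) (F : Config N → Config N → ℝ) (σ : Config N) : ℝ :=
  ((cEdges N).card : ℝ)⁻¹ * ∑ p ∈ cEdges N, ∑ st : Bool × Bool,
    qCond N J h σ p.1 p.2 st.1 st.2 * F σ (upd σ p.1 p.2 st.1 st.2)

/-- The weight of the Gibbs measure conditioned on the event `S`. -/
def wCond (N : ℕ) (J h : ℝ) (S : Config N → Prop) (σ : Config N) : ℝ :=
  Set.indicator {σ | S σ} (wConf N J h) σ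

/-- `ℙ_ℓ(A) = ℙ(A | S)`, probability under the conditioned Gibbs measure. -/
def probL (N : ℕ) (J h : ℝ) (S A : Config N → Prop) : ℝ :=
  (∑ σ : Config N, Set.indicator {σ | A σ} (wCond N J h S) σ) / ∑ σ : Config N, wCond N J h S σ

/-- Expectation under the conditioned Gibbs measure `ℙ(·|S)`. -/
def EL (N : ℕ) (J h : ℝ) (S : Config N → Prop) (f : Config N → ℝ) : ℝ :=
  (∑ σ : Config N, wCond N J h S σ * f σ) / ∑ σ : Config N, wCond N J h S σ

/-- Resampling probability for the conditioned measure `ℙ(·|S)`. -/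
def qCondL (N : ℕ) (J h : ℝ) (S : Config N → Prop) (σ : Config N) (u v : Fin N)
    (s t : Bool) : ℝ :=
  wCond N J h S (upd σ u v s t) / ∑ st : Bool × Bool, wCond N J h S (upd σ u v st.1 st.2)

/-- `E_ℓ[F(σ, σ') | σ]` for the exchangeable pair under the conditioned measure. -/
def condE2L (N : ℕ) (J h : ℝ) (S : Config N → Prop) (F : Config N → Config N → ℝ)
    (σ : Config N) : ℝ :=
  ((cEdges N).card : ℝ)⁻¹ * ∑ p ∈ cEdges N, ∑ st : Bool × Bool,
    qCondL N J h S σ p.1 p.2 st.1 st.2 * F σ (upd σ p.1 p.2 st.1 st.2)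

/-- The maximizer set `O` of `𝑝̃` on `[0,1]`. -/
def maxSet (J h : ℝ) : Set ℝ :=
  {x | x ∈ Set.Icc (0:ℝ) 1 ∧ ∀ y ∈ Set.Icc (0:ℝ) 1, ptilde J h y ≤ ptilde J h x}

end

/-- The involution of a dimer configuration as a permutation. -/
def Dimer.toPerm {N : ℕ} (D : Dimer N) : Equiv.Perm (Fin N) :=
  Function.Involutive.toPerm D.1 D.2

lemma Dimer.toPerm_sq {N : ℕ} (D : Dimer N) : D.toPerm ^ 2 = 1 := by
  ext i
  rw [pow_two]
  exact congrArg Fin.val (D.2 i)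

lemma Dimer.cycleType_toPerm {N : ℕ} (D : Dimer N) :
    D.toPerm.cycleType = Multiset.replicate (Multiset.card D.toPerm.cycleType) 2 :=
  haveI : Fact (Nat.Prime 2) := ⟨Nat.prime_two⟩
  Multiset.eq_replicate.mpr ⟨rfl, Equiv.Perm.pow_prime_eq_one_iff.mp D.toPerm_sq⟩

lemma Dimer.card_monomers_add {N : ℕ} (D : Dimer N) :
    (monomers D).card + 2 * Multiset.card D.toPerm.cycleType = N := by
  have h1 := Equiv.Perm.sum_cycleType D.toPerm
  rw [D.cycleType_toPerm, Multiset.sum_replicate] at h1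
  have h2 : monomers D = D.toPerm.supportᶜ := by
    ext i
    simp only [monomers, mem_filter, mem_univ, true_and, mem_compl, Equiv.Perm.mem_support,
      not_not]
    rfl
  rw [h2, Finset.card_compl, Fintype.card_fin]
  rw [smul_eq_mul] at h1
  have h3 : D.toPerm.support.card ≤ N := by
    simpa using Finset.card_le_univ D.toPerm.support
  omega

lemma card_cycleType_fiber {N j : ℕ} (hj : 2 * j ≤ N) :
    (univ.filter fun D : Dimer N => Multiset.card D.toPerm.cycleType = j).card *
      ((N - 2 * j).factorial * 2 ^ j * j.factorial) = N.factorial := by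
  have key := Equiv.Perm.card_of_cycleType_mul_eq (Fin N) (Multiset.replicate j 2)
  have hp : (∏ n ∈ (Multiset.replicate j 2).toFinset,
      ((Multiset.replicate j 2).count n).factorial) = j.factorial := by
    rcases Nat.eq_zero_or_pos j with rfl | hpos
    · simp
    · rw [Multiset.toFinset_replicate, if_neg hpos.ne']
      simp
  have hcond : (Multiset.replicate j 2).sum ≤ Fintype.card (Fin N) ∧
      ∀ a ∈ Multiset.replicate j 2, 2 ≤ a := by
    refine ⟨by simp; omega, fun a ha => ?_⟩
    rw [Multiset.eq_of_mem_replicate ha]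
  rw [if_pos hcond, hp, Multiset.sum_replicate, Multiset.prod_replicate, Fintype.card_fin,
    smul_eq_mul, mul_comm j 2] at key
  rw [← key]
  congr 1
  refine Finset.card_bij (fun D _ => D.toPerm) ?_ ?_ ?_
  · intro D hD
    rw [Finset.mem_filter] at hD ⊢
    refine ⟨mem_univ _, ?_⟩
    rw [D.cycleType_toPerm, hD.2]
  · intro D _ D' _ hDD
    apply Subtype.ext
    funext i
    exact congrArg (fun σ : Equiv.Perm (Fin N) => σ i) hDD
  · intro σ hσ
    rw [Finset.mem_filter] at hσ
    have : Fact (Nat.Prime 2) := ⟨Nat.prime_two⟩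
    have hsq : σ ^ 2 = 1 := by
      rw [Equiv.Perm.pow_prime_eq_one_iff, hσ.2]
      intro c hc
      exact Multiset.eq_of_mem_replicate hc
    have hinv : ∀ i, σ (σ i) = i := by
      intro i
      have := congrArg (fun τ : Equiv.Perm (Fin N) => τ i) hsq
      simpa [pow_two] using this
    have hto : Dimer.toPerm (⟨σ, hinv⟩ : Dimer N) = σ := by
      ext i
      rfl
    refine ⟨⟨σ, hinv⟩, ?_, hto⟩
    rw [Finset.mem_filter]
    refine ⟨mem_univ _, ?_⟩
    rw [hto, hσ.2, Multiset.card_replicate]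

/-- The number of dimer configurations on `N` vertices with `j` dimers. -/
noncomputable def dimerCount (N j : ℕ) : ℝ :=
  (N.factorial : ℝ) / ((N - 2 * j).factorial * 2 ^ j * j.factorial)

lemma dimerCount_pos (N j : ℕ) : 0 < dimerCount N j := by
  unfold dimerCount
  positivity

lemma sum_dimer {N : ℕ} (F : ℕ → ℝ) :
    ∑ D : Dimer N, F (monomers D).card =
      ∑ j ∈ range (N / 2 + 1), dimerCount N j * F (N - 2 * j) := by
  rw [← Finset.sum_fiberwise_of_maps_to (s := univ) (t := range (N / 2 + 1))
    (g := fun D : Dimer N => Multiset.card D.toPerm.cycleType)]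
  · refine Finset.sum_congr rfl fun j hj => ?_
    have hj' : 2 * j ≤ N := by
      rw [mem_range] at hj
      omega
    rw [Finset.sum_congr rfl (g := fun _ => F (N - 2 * j)), Finset.sum_const, nsmul_eq_mul]
    · congr 1
      rw [dimerCount, eq_div_iff (by positivity)]
      exact_mod_cast card_cycleType_fiber hj'
    · intro D hD
      rw [Finset.mem_filter] at hD
      have := D.card_monomers_add
      rw [hD.2] at this
      congr 1
      omega
  · intro D _
    have := D.card_monomers_add
    rw [mem_range]
    omega

lemma gFun_pos (x : ℝ) : 0 < gFun x := by
  have h : Real.exp (2 * x) < √(Real.exp (4 * x) + 4 * Real.exp (2 * x)) := by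
    apply Real.lt_sqrt_of_sq_lt
    have h4 : Real.exp (4 * x) = Real.exp (2 * x) ^ 2 := by
      rw [← Real.exp_nat_mul]
      ring_nf
    rw [h4]
    linarith [Real.exp_pos (2 * x)]
  unfold gFun
  linarith

lemma gFun_sq (x : ℝ) : gFun x ^ 2 = (1 - gFun x) * Real.exp (2 * x) := by
  have h4 : Real.exp (4 * x) = Real.exp (2 * x) ^ 2 := by
    rw [← Real.exp_nat_mul]
    ring_nf
  have hs := Real.sq_sqrt (show 0 ≤ Real.exp (4 * x) + 4 * Real.exp (2 * x) by positivity)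
  unfold gFun
  linear_combination hs / 4 + h4 / 4

lemma gFun_lt_one (x : ℝ) : gFun x < 1 := by
  have h1 := gFun_sq x
  have h2 := gFun_pos x
  have h3 := Real.exp_pos (2 * x)
  by_contra! h
  nlinarith [mul_nonneg (sub_nonneg.2 h) h3.le, pow_pos h2 2]

/-- The fixed-point relation of `gFun` in logarithmic form. -/
lemma two_mul_log_gFun (x : ℝ) : 2 * Real.log (gFun x) = Real.log (1 - gFun x) + 2 * x := by
  have h := congrArg Real.log (gFun_sq x)
  rwa [Real.log_pow, Real.log_mul (sub_pos.2 (gFun_lt_one x)).ne' (Real.exp_pos _).ne',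
    Real.log_exp, Nat.cast_ofNat] at h

lemma hasDerivAt_gFun (x : ℝ) :
    HasDerivAt gFun (2 * gFun x * (1 - gFun x) / (2 - gFun x)) x := by
  have hpos : 0 < Real.exp (4 * x) + 4 * Real.exp (2 * x) := by positivity
  have e4 : HasDerivAt (fun y : ℝ => Real.exp (4 * y)) (Real.exp (4 * x) * (4 * 1)) x :=
    ((hasDerivAt_id x).const_mul 4).exp
  have e2 : HasDerivAt (fun y : ℝ => Real.exp (2 * y)) (Real.exp (2 * x) * (2 * 1)) x :=
    ((hasDerivAt_id x).const_mul 2).exp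
  have hd := (((e4.add (e2.const_mul 4)).sqrt hpos.ne').sub e2).div_const 2
  refine hd.congr_deriv ?_
  simp only [Pi.add_apply]
  have h4 : Real.exp (4 * x) = Real.exp (2 * x) ^ 2 := by
    rw [← Real.exp_nat_mul]
    ring_nf
  have hg : gFun x = (√(Real.exp (4 * x) + 4 * Real.exp (2 * x)) - Real.exp (2 * x)) / 2 := rfl
  have hlt := gFun_lt_one x
  have hs := Real.sq_sqrt hpos.le
  have hS := Real.sqrt_pos.2 hpos
  rw [hg] at hlt ⊢
  set S := √(Real.exp (4 * x) + 4 * Real.exp (2 * x))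
  rw [h4] at hs ⊢
  set E := Real.exp (2 * x)
  have hne : 2 - (S - E) / 2 ≠ 0 := by linarith
  rw [eq_div_iff hne]
  field_simp
  linear_combination 4 * (S - E - 2) * hs

lemma hasDerivAt_tauFun (J h x : ℝ) : HasDerivAt (tauFun J h) (2 * J) x := by
  have := ((((hasDerivAt_id x).const_mul 2).sub_const 1).mul_const J).add_const h
  exact this.congr_deriv (by ring)

lemma hasDerivAt_ptilde (J h x : ℝ) :
    HasDerivAt (ptilde J h) (2 * J * (gFun (tauFun J h x) - x)) x := by
  have hg := (hasDerivAt_gFun (tauFun J h x)).comp x (hasDerivAt_tauFun J h x)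
  have hlt := gFun_lt_one (tauFun J h x)
  have h1 := hg.const_sub 1
  have h2 := h1.log (sub_pos.2 hlt).ne'
  have h3 := ((hasDerivAt_id x).pow 2).const_mul (-J)
  have h4 := h3.sub ((h1.add h2).div_const 2)
  refine h4.congr_deriv ?_
  simp only [id, Function.comp_apply]
  have : 1 - gFun (tauFun J h x) ≠ 0 := (sub_pos.2 hlt).ne'
  have : 2 - gFun (tauFun J h x) ≠ 0 := by linarith
  field_simp
  push_cast
  ring

lemma iteratedDeriv_two_ptilde (J h x : ℝ) :
    iteratedDeriv 2 (ptilde J h) x =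
      2 * J * (2 * gFun (tauFun J h x) * (1 - gFun (tauFun J h x)) /
        (2 - gFun (tauFun J h x)) * (2 * J) - 1) := by
  rw [iteratedDeriv_succ, iteratedDeriv_one]
  have h1 : deriv (ptilde J h) = fun x => 2 * J * (gFun (tauFun J h x) - x) :=
    funext fun x => (hasDerivAt_ptilde J h x).deriv
  rw [h1]
  have hg := (hasDerivAt_gFun (tauFun J h x)).comp x (hasDerivAt_tauFun J h x)
  exact ((hg.sub (hasDerivAt_id x)).const_mul (2 * J)).deriv

/-- The exponential rate of the Gibbs weight of configurations with monomer density `x`. -/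
noncomputable def rateFun (J h x : ℝ) : ℝ :=
  J * x ^ 2 + (h - J) * x - x * Real.log x - (1 - x) / 2 * Real.log (1 - x) - (1 - x) / 2

lemma continuous_rateFun (J h : ℝ) : Continuous (rateFun J h) := by
  have h1 : Continuous fun x : ℝ => x * Real.log x := Real.continuous_mul_log
  have h2 : Continuous fun x : ℝ => (1 - x) * Real.log (1 - x) :=
    Real.continuous_mul_log.comp (continuous_const.sub continuous_id)
  have h3 : rateFun J h = fun x => J * x ^ 2 + (h - J) * x - x * Real.log x -
      (1 - x) * Real.log (1 - x) / 2 - (1 - x) / 2 := by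
    funext x
    unfold rateFun
    ring
  rw [h3]
  fun_prop

/-- Gibbs' inequality for a single pair of weights. -/
lemma mul_log_sub_log_le {x y : ℝ} (hx : 0 ≤ x) (hy : 0 < y) :
    x * (Real.log y - Real.log x) ≤ y - x := by
  rcases hx.eq_or_lt with rfl | hx
  · simpa using hy.le
  · rw [← Real.log_div hy.ne' hx.ne']
    have := mul_le_mul_of_nonneg_left (Real.log_le_sub_one_of_pos (div_pos hy hx)) hx.le
    rwa [mul_sub, mul_div_cancel₀ _ hx.ne', mul_one] at this

lemma rateFun_le_ptilde (J h : ℝ) {x : ℝ} (hx : x ∈ Set.Icc (0 : ℝ) 1) :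
    rateFun J h x ≤ ptilde J h x := by
  have hg0 := gFun_pos (tauFun J h x)
  have hg1 := gFun_lt_one (tauFun J h x)
  have h1 := mul_log_sub_log_le hx.1 hg0
  have h2 := mul_log_sub_log_le (sub_nonneg.2 hx.2) (sub_pos.2 hg1)
  have h3 := two_mul_log_gFun (tauFun J h x)
  have h4 : tauFun J h x = (2 * x - 1) * J + h := rfl
  have h5 : Real.log (gFun (tauFun J h x)) =
      Real.log (1 - gFun (tauFun J h x)) / 2 + ((2 * x - 1) * J + h) := by linarith
  unfold rateFun ptilde
  rw [h5] at h1
  nlinarith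

lemma rateFun_eq_ptilde (J h : ℝ) {x : ℝ} (hx : x = gFun (tauFun J h x)) :
    rateFun J h x = ptilde J h x := by
  have h3 := two_mul_log_gFun (tauFun J h x)
  have h4 : tauFun J h x = (2 * x - 1) * J + h := rfl
  unfold rateFun ptilde
  rw [← hx] at h3 ⊢
  rw [h4] at h3
  have h5 : Real.log x = Real.log (1 - x) / 2 + ((2 * x - 1) * J + h) := by linarith
  rw [h5]
  ring

/-- The density of the centered Gaussian with variance `v`. -/
noncomputable def gaussDens (v t : ℝ) : ℝ := (√(2 * π * v))⁻¹ * Real.exp (-t ^ 2 / (2 * v))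

lemma gaussDens_nonneg (v t : ℝ) : 0 ≤ gaussDens v t := by
  unfold gaussDens
  positivity

lemma gaussCDF_nonneg (v z : ℝ) : 0 ≤ gaussCDF v z := ENNReal.toReal_nonneg

lemma gaussCDF_le_one (v z : ℝ) : gaussCDF v z ≤ 1 := by
  have h : ProbabilityTheory.gaussianReal 0 (Real.toNNReal v) (Set.Iic z) ≤ 1 := prob_le_one
  exact ENNReal.toReal_le_of_le_ofReal zero_le_one (by simpa using h)

lemma gaussCDF_mono (v : ℝ) : Monotone (gaussCDF v) := fun _ _ hab =>
  ENNReal.toReal_mono (measure_ne_top _ _) (measure_mono (Set.Iic_subset_Iic.2 hab))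

lemma gaussCDF_eq_integral {v : ℝ} (hv : 0 < v) (z : ℝ) :
    gaussCDF v z = ∫ t in Set.Iic z, gaussDens v t := by
  have hv' : Real.toNNReal v ≠ 0 := by simpa using hv
  have hd : ProbabilityTheory.gaussianPDFReal 0 (Real.toNNReal v) = gaussDens v := by
    funext t
    simp [ProbabilityTheory.gaussianPDFReal_def, gaussDens, Real.coe_toNNReal v hv.le]
  rw [gaussCDF, ProbabilityTheory.gaussianReal_apply_eq_integral 0 hv', hd,
    ENNReal.toReal_ofReal (integral_nonneg (gaussDens_nonneg v))]

lemma integrable_gaussDens {v : ℝ} (hv : 0 < v) : Integrable (gaussDens v) := by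
  have h := ProbabilityTheory.integrable_gaussianPDFReal 0 (Real.toNNReal v)
  have hd : ProbabilityTheory.gaussianPDFReal 0 (Real.toNNReal v) = gaussDens v := by
    funext t
    simp [ProbabilityTheory.gaussianPDFReal_def, gaussDens, Real.coe_toNNReal v hv.le]
  rwa [hd] at h

lemma continuous_gaussDens (v : ℝ) : Continuous (gaussDens v) := by
  unfold gaussDens
  fun_prop

lemma hasDerivAt_gaussCDF {v : ℝ} (hv : 0 < v) (z : ℝ) :
    HasDerivAt (gaussCDF v) (gaussDens v z) z := by
  have h1 : gaussCDF v = fun z => (∫ t in (0 : ℝ)..z, gaussDens v t) + gaussCDF v 0 := by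
    funext z
    rw [gaussCDF_eq_integral hv z, gaussCDF_eq_integral hv 0,
      ← intervalIntegral.integral_Iic_sub_Iic (integrable_gaussDens hv).integrableOn
        (integrable_gaussDens hv).integrableOn]
    ring
  rw [h1]
  exact ((continuous_gaussDens v).integral_hasStrictDerivAt 0 z).hasDerivAt.add_const _

lemma gaussianReal_abs_ge_le {v : ℝ} (hv : 0 < v) {x : ℝ} (hx : 0 < x) :
    (ProbabilityTheory.gaussianReal 0 (Real.toNNReal v) {t | x ≤ |t|}).toReal ≤ v / x ^ 2 := by
  have h := ProbabilityTheory.meas_ge_le_variance_div_sq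
    (μ := ProbabilityTheory.gaussianReal 0 (Real.toNNReal v))
    (ProbabilityTheory.memLp_id_gaussianReal (μ := 0) (v := Real.toNNReal v) 2) hx
  rw [ProbabilityTheory.variance_id_gaussianReal] at h
  simp only [id, ProbabilityTheory.integral_id_gaussianReal, sub_zero,
    Real.coe_toNNReal v hv.le] at h
  exact ENNReal.toReal_le_of_le_ofReal (by positivity) h

lemma gaussCDF_le_of_le_neg {v : ℝ} (hv : 0 < v) {x z : ℝ} (hx : 0 < x) (hz : z ≤ -x) :
    gaussCDF v z ≤ v / x ^ 2 := by
  refine le_trans (ENNReal.toReal_mono (measure_ne_top _ _) (measure_mono ?_))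
    (gaussianReal_abs_ge_le hv hx)
  intro t ht
  have ht' : t ≤ z := ht
  show x ≤ |t|
  exact le_abs.2 (Or.inr (by linarith))

lemma one_sub_gaussCDF_le {v : ℝ} (hv : 0 < v) {x z : ℝ} (hx : 0 < x) (hz : x ≤ z) :
    1 - gaussCDF v z ≤ v / x ^ 2 := by
  have h : 1 - gaussCDF v z =
      (ProbabilityTheory.gaussianReal 0 (Real.toNNReal v)).real (Set.Iic z)ᶜ := by
    rw [measureReal_compl measurableSet_Iic, probReal_univ]
    rfl
  rw [h]
  refine le_trans (ENNReal.toReal_mono (measure_ne_top _ _) (measure_mono ?_))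
    (gaussianReal_abs_ge_le hv hx)
  intro t ht
  have ht' : z < t := not_le.1 ht
  show x ≤ |t|
  exact le_abs.2 (Or.inl (by linarith))

/-- Gaussian decay dominates cubic growth with room for an integrable factor. -/
lemma exists_gaussian_decay {c : ℝ} (hc : 0 < c) :
    ∃ C : ℝ, 0 < C ∧ ∀ t : ℝ, (1 + |t| ^ 3) * Real.exp (-c * t ^ 2) ≤ C / (1 + t ^ 2) := by
  refine ⟨2 * (6 / c ^ 3 * Real.exp c), by positivity, fun t => ?_⟩
  rw [le_div_iff₀ (by positivity)]
  have h1 : 1 + |t| ^ 3 ≤ 2 * (1 + t ^ 2) ^ 2 := by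
    have h := sq_abs t
    rw [← h]
    nlinarith [abs_nonneg t, sq_nonneg (|t| - 1), sq_nonneg (|t| ^ 2 - |t|), sq_nonneg (|t| ^ 2)]
  have h2 : (c * (1 + t ^ 2)) ^ 3 / 6 ≤ Real.exp (c * (1 + t ^ 2)) := by
    have := Real.pow_div_factorial_le_exp (c * (1 + t ^ 2)) (by positivity) 3
    simpa [Nat.factorial] using this
  have h3 : (1 + t ^ 2) ^ 3 * Real.exp (-c * t ^ 2) ≤ 6 / c ^ 3 * Real.exp c := by
    have h4 : Real.exp (-c * t ^ 2) = Real.exp c / Real.exp (c * (1 + t ^ 2)) := by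
      rw [← Real.exp_sub]
      ring_nf
    rw [h4, mul_div_assoc', div_le_iff₀ (Real.exp_pos _)]
    have h5 : (1 + t ^ 2) ^ 3 ≤ 6 / c ^ 3 * Real.exp (c * (1 + t ^ 2)) := by
      rw [div_mul_eq_mul_div, le_div_iff₀ (by positivity)]
      rw [mul_pow] at h2
      linarith
    have := mul_le_mul_of_nonneg_right h5 (Real.exp_pos c).le
    linarith
  calc (1 + |t| ^ 3) * Real.exp (-c * t ^ 2) * (1 + t ^ 2)
      ≤ 2 * (1 + t ^ 2) ^ 2 * Real.exp (-c * t ^ 2) * (1 + t ^ 2) := by gcongr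
    _ = 2 * ((1 + t ^ 2) ^ 3 * Real.exp (-c * t ^ 2)) := by ring
    _ ≤ _ := by gcongr

lemma one_add_sq_le_of_mem_Icc {η s t : ℝ} (hη : η ≤ 1) (h1 : t - η ≤ s) (h2 : s ≤ t) :
    1 + s ^ 2 ≤ 3 * (1 + t ^ 2) ∧ 1 + t ^ 2 ≤ 3 * (1 + s ^ 2) := by
  have h : (t - s) ^ 2 ≤ 1 := by
    rw [sq_le_one_iff₀ (by linarith)]
    linarith
  constructor <;> nlinarith [sq_nonneg (s - 2 * t), sq_nonneg (t - 2 * s), sq_nonneg (s + t)]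

lemma hasDerivAt_gaussDens {v : ℝ} (hv : 0 < v) (t : ℝ) :
    HasDerivAt (gaussDens v) (-(t / v) * gaussDens v t) t := by
  have h := ((((hasDerivAt_id t).pow 2).neg.div_const (2 * v)).exp).const_mul (√(2 * π * v))⁻¹
  refine h.congr_deriv ?_
  simp only [id, gaussDens, Pi.neg_apply, Pi.pow_apply]
  field_simp
  push_cast
  ring

lemma exists_gaussCDF_cell_bound {v : ℝ} (hv : 0 < v) :
    ∃ C : ℝ, 0 < C ∧ ∀ t η : ℝ, 0 < η → η ≤ 1 →
      |gaussCDF v t - gaussCDF v (t - η) - η * gaussDens v t| ≤ C * η ^ 2 / (1 + t ^ 2) := by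
  obtain ⟨C, hC, hdecay⟩ := exists_gaussian_decay (c := 1 / (2 * v)) (by positivity)
  refine ⟨3 * (2 * (√(2 * π * v))⁻¹ / v * C), by positivity, fun t η hη hη1 => ?_⟩
  have hderiv : ∀ r : ℝ, |-(r / v) * gaussDens v r| ≤
      2 * (√(2 * π * v))⁻¹ / v * C / (1 + r ^ 2) := by
    intro r
    have h1 := hdecay r
    have h2 : |r| ≤ 2 * (1 + |r| ^ 3) := by
      nlinarith [abs_nonneg r, sq_nonneg (|r| - 1), mul_nonneg (abs_nonneg r) (sq_nonneg (|r| - 1))]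
    have h3 : -(1 / (2 * v)) * r ^ 2 = -r ^ 2 / (2 * v) := by ring
    rw [h3] at h1
    rw [abs_mul, abs_neg, abs_div, abs_of_pos hv, abs_of_nonneg (gaussDens_nonneg v r), gaussDens]
    calc |r| / v * ((√(2 * π * v))⁻¹ * Real.exp (-r ^ 2 / (2 * v)))
        ≤ 2 * (1 + |r| ^ 3) / v * ((√(2 * π * v))⁻¹ * Real.exp (-r ^ 2 / (2 * v))) := by gcongr
      _ = 2 * (√(2 * π * v))⁻¹ / v * ((1 + |r| ^ 3) * Real.exp (-r ^ 2 / (2 * v))) := by ring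
      _ ≤ 2 * (√(2 * π * v))⁻¹ / v * (C / (1 + r ^ 2)) := by gcongr
      _ = _ := by ring
  obtain ⟨s, hs, hs'⟩ := exists_hasDerivAt_eq_slope (gaussCDF v) (gaussDens v)
    (show t - η < t by linarith) (HasDerivAt.continuousOn fun x _ => hasDerivAt_gaussCDF hv x)
    fun x _ => hasDerivAt_gaussCDF hv x
  obtain ⟨r, hr, hr'⟩ := exists_hasDerivAt_eq_slope (gaussDens v)
    (fun r => -(r / v) * gaussDens v r) hs.2
    (HasDerivAt.continuousOn fun x _ => hasDerivAt_gaussDens hv x)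
    fun x _ => hasDerivAt_gaussDens hv x
  have hst : 0 < t - s := by linarith [hs.2]
  have e1 : gaussCDF v t - gaussCDF v (t - η) = η * gaussDens v s := by
    rw [hs', sub_sub_cancel]
    field_simp
  have e2 : gaussDens v t - gaussDens v s = (-(r / v) * gaussDens v r) * (t - s) := by
    rw [hr']
    field_simp
  have e3 : gaussCDF v t - gaussCDF v (t - η) - η * gaussDens v t =
      -(η * ((-(r / v) * gaussDens v r) * (t - s))) := by
    rw [e1, ← e2]
    ring
  rw [e3, abs_neg, abs_mul, abs_mul, abs_of_pos hη, abs_of_pos hst]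
  have h4 : t - s ≤ η := by linarith [hs.1]
  have h5 := (one_add_sq_le_of_mem_Icc (s := r) (t := t) hη1
    (by linarith [hs.1, hr.1]) hr.2.le).2
  have h6 : (1 + r ^ 2)⁻¹ ≤ 3 * (1 + t ^ 2)⁻¹ := by
    rw [← div_eq_mul_inv, inv_le_comm₀ (by positivity) (by positivity), inv_div]
    linarith
  calc η * (|-(r / v) * gaussDens v r| * (t - s))
      ≤ η * (2 * (√(2 * π * v))⁻¹ / v * C / (1 + r ^ 2) * η) := by
        gcongr
        exact hderiv r
    _ = η ^ 2 * (2 * (√(2 * π * v))⁻¹ / v * C) * (1 + r ^ 2)⁻¹ := by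
        rw [div_eq_mul_inv _ (1 + r ^ 2)]
        ring
    _ ≤ η ^ 2 * (2 * (√(2 * π * v))⁻¹ / v * C) * (3 * (1 + t ^ 2)⁻¹) := by gcongr
    _ = _ := by
        rw [div_eq_mul_inv _ (1 + t ^ 2)]
        ring

lemma gaussCDF_le_add {v : ℝ} (hv : 0 < v) {t η : ℝ} (hη : 0 < η) :
    gaussCDF v t ≤ gaussCDF v (t - η) + (√(2 * π * v))⁻¹ * η := by
  obtain ⟨s, hs, hs'⟩ := exists_hasDerivAt_eq_slope (gaussCDF v) (gaussDens v)
    (show t - η < t by linarith) (HasDerivAt.continuousOn fun x _ => hasDerivAt_gaussCDF hv x)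
    fun x _ => hasDerivAt_gaussCDF hv x
  have e1 : gaussCDF v t - gaussCDF v (t - η) = gaussDens v s * η := by
    rw [hs', sub_sub_cancel]
    field_simp
  have h2 : gaussDens v s ≤ (√(2 * π * v))⁻¹ := by
    unfold gaussDens
    refine mul_le_of_le_one_right (by positivity) (Real.exp_le_one_iff.2 ?_)
    rw [neg_div]
    have : 0 ≤ s ^ 2 / (2 * v) := by positivity
    linarith
  have := mul_le_mul_of_nonneg_right h2 hη.le
  linarith

lemma sum_div_one_add_sq_le {η : ℝ} (hη : 0 < η) (hη1 : η ≤ 1) (a : ℝ) (n : ℕ) :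
    ∑ j ∈ range n, η / (1 + (a - η * j) ^ 2) ≤ 3 * π := by
  have hcell : ∀ t : ℝ, η / (1 + t ^ 2) ≤ 3 * (Real.arctan t - Real.arctan (t - η)) := by
    intro t
    obtain ⟨s, hs, hs'⟩ := exists_hasDerivAt_eq_slope Real.arctan (fun x => 1 / (1 + x ^ 2))
      (show t - η < t by linarith) Real.continuous_arctan.continuousOn
      fun x _ => Real.hasDerivAt_arctan x
    have e1 : Real.arctan t - Real.arctan (t - η) = η * (1 + s ^ 2)⁻¹ := by
      rw [← one_div, hs', sub_sub_cancel]
      field_simp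
    have h5 := (one_add_sq_le_of_mem_Icc (s := s) (t := t) hη1 hs.1.le hs.2.le).1
    have h6 : (1 + t ^ 2)⁻¹ ≤ 3 * (1 + s ^ 2)⁻¹ := by
      rw [← div_eq_mul_inv, inv_le_comm₀ (by positivity) (by positivity), inv_div]
      linarith
    rw [e1, div_eq_mul_inv]
    nlinarith
  calc ∑ j ∈ range n, η / (1 + (a - η * j) ^ 2)
      ≤ ∑ j ∈ range n, 3 * (Real.arctan (a - η * j) - Real.arctan (a - η * (j + 1 : ℕ))) := by
        refine Finset.sum_le_sum fun j _ => ?_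
        have h := hcell (a - η * j)
        have e : a - η * j - η = a - η * (j + 1 : ℕ) := by
          push_cast
          ring
        rwa [e] at h
    _ = 3 * (Real.arctan (a - η * (0 : ℕ)) - Real.arctan (a - η * n)) := by
        rw [← Finset.mul_sum, Finset.sum_range_sub' (fun j : ℕ => Real.arctan (a - η * j))]
    _ ≤ 3 * π := by
        have h1 := (Real.arctan_lt_pi_div_two (a - η * (0 : ℕ))).le
        have h2 := (Real.neg_pi_div_two_lt_arctan (a - η * n)).le
        exact mul_le_mul_of_nonneg_left ((sub_le_sub h1 h2).trans (by linarith)) (by norm_num)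

lemma abs_sum_cells_sub_le {v : ℝ} (hv : 0 < v) {η : ℝ} (hη : 0 < η) (a z : ℝ) (n : ℕ) :
    |∑ j ∈ range n with a - η * (j : ℕ) ≤ z,
        (gaussCDF v (a - η * j) - gaussCDF v (a - η * j - η)) - gaussCDF v z| ≤
      (√(2 * π * v))⁻¹ * η + gaussCDF v (a - η * n) + (1 - gaussCDF v a) := by
  set q := ⌈(a - z) / η⌉₊ with hq
  have hiff : ∀ j : ℕ, a - η * j ≤ z ↔ q ≤ j := by
    intro j
    rw [hq, Nat.ceil_le, div_le_iff₀ hη]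
    constructor <;> intro h <;> linarith
  have hfilter : (range n).filter (fun j : ℕ => a - η * j ≤ z) = Ico q n := by
    ext j
    simp only [mem_filter, mem_range, mem_Ico, hiff]
    tauto
  rw [hfilter]
  have hL : 0 ≤ (√(2 * π * v))⁻¹ * η := by positivity
  have h0 := gaussCDF_nonneg v (a - η * n)
  have h1 := gaussCDF_le_one v a
  rcases le_or_gt q n with hqn | hqn
  · have htel : ∑ j ∈ Ico q n, (gaussCDF v (a - η * j) - gaussCDF v (a - η * j - η)) =
        gaussCDF v (a - η * q) - gaussCDF v (a - η * n) := by
      have e : ∀ j : ℕ, a - η * j - η = a - η * (j + 1 : ℕ) := by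
        intro j
        push_cast
        ring
      simp only [e]
      have := Finset.sum_Ico_sub (fun j : ℕ => -gaussCDF v (a - η * j)) hqn
      rw [show gaussCDF v (a - η * q) - gaussCDF v (a - η * n) =
        -gaussCDF v (a - η * n) - -gaussCDF v (a - η * q) by ring, ← this]
      refine Finset.sum_congr rfl fun j _ => ?_
      ring
    rw [htel]
    have hz1 : gaussCDF v (a - η * q) ≤ gaussCDF v z := gaussCDF_mono v ((hiff q).2 le_rfl)
    rcases Nat.eq_zero_or_pos q with h | h
    · rw [h] at hz1 ⊢
      simp only [Nat.cast_zero, mul_zero, sub_zero] at hz1 ⊢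
      have := gaussCDF_le_one v z
      rw [abs_le]
      constructor <;> linarith
    · have hz2 : ¬ (a - η * (q - 1 : ℕ) ≤ z) := by
        rw [hiff]
        omega
      rw [not_le, Nat.cast_pred h] at hz2
      have hz3 : gaussCDF v z ≤ gaussCDF v (a - η * (q - 1)) := gaussCDF_mono v hz2.le
      have hz4 := gaussCDF_le_add hv (t := a - η * (q - 1)) hη
      rw [show a - η * ((q : ℝ) - 1) - η = a - η * q by ring] at hz4
      rw [abs_le]
      constructor <;> linarith
  · rw [Finset.Ico_eq_empty (by omega), Finset.sum_empty]
    have hz2 : ¬ (a - η * n ≤ z) := by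
      rw [hiff]
      omega
    have hz3 := gaussCDF_mono v (not_le.1 hz2).le
    have hz4 := gaussCDF_nonneg v z
    rw [abs_le]
    constructor <;> linarith

/-- A lattice distribution whose masses are close to Gaussian cell masses has a distribution
function uniformly close to the Gaussian one, after normalization. -/
lemma abs_ratio_sub_gaussCDF_le {v : ℝ} (hv : 0 < v) {η : ℝ} (hη : 0 < η) (a : ℝ) (n : ℕ)
    (w b : ℕ → ℝ) {e : ℝ}
    (hw : ∀ j ∈ range n, |w j - (gaussCDF v (a - η * j) - gaussCDF v (a - η * j - η))| ≤ b j)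
    (he : ∑ j ∈ range n, b j +
      ((√(2 * π * v))⁻¹ * η + gaussCDF v (a - η * n) + (1 - gaussCDF v a)) ≤ e)
    (he4 : e ≤ 1 / 4) (z : ℝ) :
    |(∑ j ∈ range n with a - η * (j : ℕ) ≤ z, w j) / ∑ j ∈ range n, w j - gaussCDF v z| ≤
      6 * e := by
  have hS : ∀ z, |∑ j ∈ range n with a - η * (j : ℕ) ≤ z, w j - gaussCDF v z| ≤ e := by
    intro z
    have h1 := abs_sum_cells_sub_le hv hη a z n
    have h2 : |∑ j ∈ range n with a - η * (j : ℕ) ≤ z, w j -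
        ∑ j ∈ range n with a - η * (j : ℕ) ≤ z,
          (gaussCDF v (a - η * j) - gaussCDF v (a - η * j - η))| ≤ ∑ j ∈ range n, b j := by
      rw [← Finset.sum_sub_distrib]
      refine (Finset.abs_sum_le_sum_abs _ _).trans ?_
      refine (Finset.sum_le_sum fun j hj => hw j (Finset.mem_filter.1 hj).1).trans ?_
      exact Finset.sum_le_sum_of_subset_of_nonneg (Finset.filter_subset _ _)
        fun j hj _ => (abs_nonneg _).trans (hw j hj)
    have h3 := abs_sub_le (∑ j ∈ range n with a - η * (j : ℕ) ≤ z, w j)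
      (∑ j ∈ range n with a - η * (j : ℕ) ≤ z,
          (gaussCDF v (a - η * j) - gaussCDF v (a - η * j - η))) (gaussCDF v z)
    linarith
  have hb : 0 ≤ ∑ j ∈ range n, b j :=
    Finset.sum_nonneg fun j hj => (abs_nonneg _).trans (hw j hj)
  have hL : 0 ≤ (√(2 * π * v))⁻¹ * η := by positivity
  have h0 := gaussCDF_nonneg v (a - η * n)
  have h1 := gaussCDF_le_one v a
  have hZ := hS a
  have hall : (range n).filter (fun j : ℕ => a - η * j ≤ a) = range n := by
    refine Finset.filter_true_of_mem fun j _ => ?_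
    have : 0 ≤ η * j := by positivity
    linarith
  rw [hall] at hZ
  have hSz := hS z
  set S := ∑ j ∈ range n with a - η * (j : ℕ) ≤ z, w j
  set Z := ∑ j ∈ range n, w j
  have hΦ0 := gaussCDF_nonneg v z
  have hΦ1 := gaussCDF_le_one v z
  rw [abs_le] at hZ hSz
  have hZpos : 1 / 2 ≤ Z := by linarith
  have hZ0 : 0 < Z := by linarith
  rw [div_sub' hZ0.ne', abs_div, abs_of_pos hZ0, div_le_iff₀ hZ0, abs_le]
  have he0 : 0 ≤ e := by linarith
  constructor <;> nlinarith

/-- The total Gibbs weight of the configurations with `j` dimers. -/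
noncomputable def gibbsWeight (N : ℕ) (J h : ℝ) (j : ℕ) : ℝ :=
  dimerCount N j * Real.exp (N * (J * (((N - 2 * j : ℕ) : ℝ) / N) ^ 2 +
    bIMD N J h * (((N - 2 * j : ℕ) : ℝ) / N)))

/-- The monomer density of configurations with `j` dimers. -/
noncomputable def monDens (N j : ℕ) : ℝ := ((N : ℝ) - 2 * j) / N

lemma gibbsWeight_pos (N : ℕ) (J h : ℝ) (j : ℕ) : 0 < gibbsWeight N J h j :=
  mul_pos (dimerCount_pos N j) (Real.exp_pos _)

lemma cast_sub_div_eq_monDens {N j : ℕ} (hj : 2 * j ≤ N) :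
    ((N - 2 * j : ℕ) : ℝ) / N = monDens N j := by
  rw [monDens, Nat.cast_sub hj]
  push_cast
  rfl

lemma monDens_mem_Icc {N j : ℕ} (hN : 1 ≤ N) (hj : 2 * j ≤ N) :
    monDens N j ∈ Set.Icc (0 : ℝ) 1 := by
  have hN' : (0 : ℝ) < N := by exact_mod_cast hN
  have hj' : (2 : ℝ) * j ≤ N := by exact_mod_cast hj
  rw [monDens]
  refine ⟨div_nonneg (by linarith) hN'.le, (div_le_one hN').2 ?_⟩
  have : (0 : ℝ) ≤ j := j.cast_nonneg
  linarith

lemma log_gibbsWeight {N j : ℕ} (J h : ℝ) (hj : 2 * j ≤ N) :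
    Real.log (gibbsWeight N J h j) =
      Real.log N.factorial - Real.log (N - 2 * j).factorial - j * Real.log 2 -
        Real.log j.factorial + N * (J * monDens N j ^ 2 + (h - J) * monDens N j) +
        N * monDens N j * Real.log N / 2 := by
  rw [gibbsWeight, Real.log_mul (dimerCount_pos N j).ne' (Real.exp_pos _).ne', Real.log_exp,
    cast_sub_div_eq_monDens hj, dimerCount, Real.log_div (by positivity) (by positivity),
    Real.log_mul (by positivity) (by positivity), Real.log_mul (by positivity) (by positivity),
    Real.log_pow, bIMD]
  ring

lemma log_gibbsWeight_succ_sub {N j : ℕ} (J h : ℝ) (hN : 1 ≤ N) (hj : 2 * (j + 1) ≤ N) :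
    Real.log (gibbsWeight N J h (j + 1)) - Real.log (gibbsWeight N J h j) =
      Real.log (monDens N j) + Real.log (monDens N j - 1 / N) -
        Real.log (1 - monDens N j + 2 * (1 / N)) -
        4 * J * monDens N j + 4 * J * (1 / N) - 2 * (h - J) := by
  obtain ⟨k, hk⟩ := Nat.exists_eq_add_of_le hj
  have hN' : (0 : ℝ) < N := by exact_mod_cast hN
  have hkR : (N : ℝ) = 2 * (j + 1) + k := by exact_mod_cast hk
  have e1 : N - 2 * (j + 1) = k := by omega
  have e2 : N - 2 * j = k + 2 := by omega
  have d1 : monDens N (j + 1) = k / N := by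
    rw [← cast_sub_div_eq_monDens hj, e1]
  have d2 : monDens N j = (k + 2) / N := by
    rw [← cast_sub_div_eq_monDens (by omega), e2]
    push_cast
    rfl
  have d3 : ((k : ℝ) + 2) / N - 1 / N = (k + 1) / N := by
    field_simp
    ring
  have d4 : 1 - ((k : ℝ) + 2) / N + 2 * (1 / N) = (2 * (j + 1)) / N := by
    field_simp
    rw [hkR]
    ring
  have f1 : Real.log ((k + 2).factorial : ℝ) =
      Real.log (k + 2) + Real.log (k + 1) + Real.log k.factorial := by
    rw [Nat.factorial_succ, Nat.factorial_succ]
    push_cast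
    rw [Real.log_mul (by positivity) (by positivity), Real.log_mul (by positivity) (by positivity)]
    ring_nf
  have f2 : Real.log ((j + 1).factorial : ℝ) = Real.log (j + 1) + Real.log j.factorial := by
    rw [Nat.factorial_succ]
    push_cast
    rw [Real.log_mul (by positivity) (by positivity)]
  rw [log_gibbsWeight J h hj, log_gibbsWeight J h (by omega), d1, d2, d3, d4, e1, e2, f1, f2,
    Real.log_div (by positivity) hN'.ne', Real.log_div (by positivity) hN'.ne',
    Real.log_div (by positivity) hN'.ne', Real.log_mul (by positivity) (by positivity)]
  push_cast
  field_simp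
  ring

lemma mul_log_sub_le_log_factorial (n : ℕ) :
    n * Real.log n - n ≤ Real.log n.factorial := by
  rcases Nat.eq_zero_or_pos n with rfl | hn
  · simp
  have hn' : (0 : ℝ) < n := by exact_mod_cast hn
  have h := Real.pow_div_factorial_le_exp (n : ℝ) hn'.le n
  have h2 := Real.log_le_log (by positivity) h
  rw [Real.log_exp, Real.log_div (by positivity) (by positivity), Real.log_pow] at h2
  linarith

lemma log_factorial_le (n : ℕ) :
    Real.log n.factorial ≤ n * Real.log n - n + 2 * Real.log (n + 1) := by
  induction n with
  | zero => simp
  | succ n ih =>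
    rw [Nat.factorial_succ]
    push_cast
    have hn : (0 : ℝ) < (n : ℝ) + 1 := by positivity
    rw [Real.log_mul (by positivity) (by positivity)]
    have h1 : (n : ℝ) / (n + 1) ≤ n * (Real.log (n + 1) - Real.log n) := by
      rcases Nat.eq_zero_or_pos n with rfl | hn0
      · simp
      have hn' : (0 : ℝ) < n := by exact_mod_cast hn0
      have := Real.one_sub_inv_le_log_of_pos (show 0 < ((n : ℝ) + 1) / n by positivity)
      rw [Real.log_div (by positivity) (by positivity), inv_div] at this
      have h2 := mul_le_mul_of_nonneg_left this hn'.le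
      have h3 : (n : ℝ) / (n + 1) = n * (1 - n / (n + 1)) := by
        field_simp
        ring
      rw [h3]
      exact h2
    have h2 : 1 / ((n : ℝ) + 2) ≤ Real.log (n + 1 + 1) - Real.log (n + 1) := by
      have := Real.one_sub_inv_le_log_of_pos (show 0 < ((n : ℝ) + 1 + 1) / (n + 1) by positivity)
      rw [Real.log_div (by positivity) (by positivity), inv_div] at this
      refine le_trans (le_of_eq ?_) this
      field_simp
      ring
    have h3 : 1 - (n : ℝ) / (n + 1) ≤ 2 * (1 / ((n : ℝ) + 2)) := by
      rw [one_sub_div hn.ne', mul_one_div, div_le_div_iff₀ hn (by positivity)]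
      have : (0 : ℝ) ≤ n := n.cast_nonneg
      linarith
    linarith

lemma stirling_main_term {N j : ℕ} (hN : 1 ≤ N) (hj : 2 * j ≤ N) :
    ((N - 2 * j : ℕ) : ℝ) * Real.log ((N - 2 * j : ℕ) : ℝ) - ((N - 2 * j : ℕ) : ℝ) +
      (j * Real.log j - j) + j * Real.log 2 =
      N * (monDens N j * Real.log (monDens N j) +
        (1 - monDens N j) / 2 * Real.log (1 - monDens N j) -
        monDens N j - (1 - monDens N j) / 2) + N * (1 + monDens N j) / 2 * Real.log N := by
  have hN' : (0 : ℝ) < N := by exact_mod_cast hN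
  have hk : ((N - 2 * j : ℕ) : ℝ) = N * monDens N j := by
    rw [← cast_sub_div_eq_monDens hj]
    field_simp
  have hjd : (j : ℝ) = N * ((1 - monDens N j) / 2) := by
    rw [monDens]
    field_simp
    ring
  have h1 : (N : ℝ) * monDens N j * Real.log (N * monDens N j) =
      N * monDens N j * Real.log N + N * (monDens N j * Real.log (monDens N j)) := by
    rcases eq_or_ne (monDens N j) 0 with h0 | h0
    · simp [h0]
    · rw [Real.log_mul hN'.ne' h0]
      ring
  have h2 : (j : ℝ) * Real.log j + j * Real.log 2 =
      j * Real.log N + j * Real.log (1 - monDens N j) := by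
    rcases Nat.eq_zero_or_pos j with h0 | h0
    · simp [h0]
    · have hj0 : (0 : ℝ) < j := by exact_mod_cast h0
      have : 1 - monDens N j = 2 * j / N := by
        rw [monDens]
        field_simp
        ring
      rw [this, Real.log_div (by positivity) (by positivity),
        Real.log_mul (by positivity) (by positivity)]
      ring
  rw [hk, h1]
  have h3 : (j : ℝ) * Real.log j - j + j * Real.log 2 =
      N * ((1 - monDens N j) / 2) * Real.log N +
        N * ((1 - monDens N j) / 2) * Real.log (1 - monDens N j) -
        N * ((1 - monDens N j) / 2) := by
    rw [← hjd]
    linarith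
  linear_combination h3

/-- Configuration-independent part of the exponent of `gibbsWeight`. -/
noncomputable def logScale (N : ℕ) : ℝ := Real.log N.factorial - N * Real.log N / 2 + N

lemma log_gibbsWeight_le {N j : ℕ} (J h : ℝ) (hN : 1 ≤ N) (hj : 2 * j ≤ N) :
    Real.log (gibbsWeight N J h j) ≤ logScale N + N * rateFun J h (monDens N j) := by
  rw [log_gibbsWeight J h hj, rateFun, logScale]
  have h1 := mul_log_sub_le_log_factorial (N - 2 * j)
  have h2 := mul_log_sub_le_log_factorial j
  have h3 := stirling_main_term hN hj
  linarith

lemma le_log_gibbsWeight {N j : ℕ} (J h : ℝ) (hN : 1 ≤ N) (hj : 2 * j ≤ N) :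
    logScale N + N * rateFun J h (monDens N j) - 4 * Real.log (N + 1) ≤
      Real.log (gibbsWeight N J h j) := by
  rw [log_gibbsWeight J h hj, rateFun, logScale]
  have h1 := log_factorial_le (N - 2 * j)
  have h2 := log_factorial_le j
  have h3 := stirling_main_term hN hj
  have h4 : Real.log (((N - 2 * j : ℕ) : ℝ) + 1) ≤ Real.log (N + 1) := by
    apply Real.log_le_log (by positivity)
    exact_mod_cast Nat.succ_le_succ (Nat.sub_le N (2 * j))
  have h5 : Real.log ((j : ℝ) + 1) ≤ Real.log (N + 1) := by
    apply Real.log_le_log (by positivity)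
    exact_mod_cast Nat.succ_le_succ (show j ≤ N by omega)
  linarith

lemma gibbsWeight_le_mul {N i j : ℕ} (J h : ℝ) (hN : 1 ≤ N) (hi : 2 * i ≤ N) (hj : 2 * j ≤ N) :
    gibbsWeight N J h j ≤ gibbsWeight N J h i *
      (((N : ℝ) + 1) ^ 4 *
        Real.exp (N * (rateFun J h (monDens N j) - rateFun J h (monDens N i)))) := by
  have h1 := log_gibbsWeight_le J h hN hj
  have h2 := le_log_gibbsWeight J h hN hi
  have hpos : (0 : ℝ) < (N : ℝ) + 1 := by positivity
  rw [← Real.log_le_log_iff (gibbsWeight_pos N J h j)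
      (mul_pos (gibbsWeight_pos N J h i) (by positivity)),
    Real.log_mul (gibbsWeight_pos N J h i).ne' (by positivity),
    Real.log_mul (by positivity) (by positivity), Real.log_exp, Real.log_pow]
  push_cast
  linarith

lemma abs_log_add_sub_le {m d : ℝ} (hm : 0 < m) (hd : |d| ≤ m / 2) :
    |Real.log (m + d) - Real.log m - d / m| ≤ 2 * d ^ 2 / m ^ 2 := by
  have hd' := abs_le.1 hd
  have hpos : 0 < m + d := by linarith
  rw [← Real.log_div hpos.ne' hm.ne']
  have h1 := Real.log_le_sub_one_of_pos (div_pos hpos hm)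
  have h2 := Real.one_sub_inv_le_log_of_pos (div_pos hpos hm)
  have e1 : (m + d) / m - 1 = d / m := by
    field_simp
    ring
  have e2 : 1 - ((m + d) / m)⁻¹ = d / m - d ^ 2 / (m * (m + d)) := by
    field_simp
    ring
  rw [e1] at h1
  rw [e2] at h2
  have h3 : d ^ 2 / (m * (m + d)) ≤ 2 * d ^ 2 / m ^ 2 := by
    rw [div_le_div_iff₀ (by positivity) (by positivity)]
    have h5 : m ^ 2 ≤ 2 * (m * (m + d)) := by nlinarith
    nlinarith [sq_nonneg d]
  have h4 : 0 ≤ 2 * d ^ 2 / m ^ 2 := by positivity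
  rw [abs_le]
  constructor <;> linarith

/-- Second-order expansion of the logarithmic weight ratio at a stationary density. -/
lemma exists_log_ratio_bound {J h m v : ℝ} (hm0 : 0 < m) (hm1 : m < 1)
    (hstat : 2 * Real.log m - Real.log (1 - m) = 4 * J * m + 2 * (h - J))
    (hcurv : 2 / m + 1 / (1 - m) - 4 * J = 2 / v) :
    ∃ δ C : ℝ, 0 < δ ∧ 0 < C ∧ ∀ d ε : ℝ, |d| ≤ δ → 0 ≤ ε → ε ≤ δ →
      |Real.log (m + d) + Real.log (m + d - ε) - Real.log (1 - (m + d) + 2 * ε) -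
        4 * J * (m + d) + 4 * J * ε - 2 * (h - J) - 2 * d / v + 2 * ε / v| ≤ C * (d ^ 2 + ε) := by
  have hm1' : 0 < 1 - m := by linarith
  set c := -(1 / m) - 2 / (1 - m) + 4 * J + 2 / v with hc
  refine ⟨min m (1 - m) / 8, 6 / m ^ 2 + 16 / (1 - m) ^ 2 + |c|,
    by have := lt_min hm0 hm1'; positivity, by positivity, fun d ε hd hε hε' => ?_⟩
  have hmin1 := min_le_left m (1 - m)
  have hmin2 := min_le_right m (1 - m)
  have hd' := abs_le.1 hd
  have b1 := abs_log_add_sub_le hm0 (d := d) (by linarith)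
  have b2 := abs_log_add_sub_le hm0 (d := d - ε) (by
    rw [abs_le]
    constructor <;> linarith)
  have b3 := abs_log_add_sub_le hm1' (d := 2 * ε - d) (by
    rw [abs_le]
    constructor <;> linarith)
  rw [← add_sub_assoc] at b2
  rw [show 1 - m + (2 * ε - d) = 1 - (m + d) + 2 * ε by ring] at b3
  have hε2 : ε ^ 2 ≤ ε := by nlinarith
  have q2 : 2 * (d - ε) ^ 2 / m ^ 2 ≤ 4 / m ^ 2 * (d ^ 2 + ε) := by
    rw [div_mul_eq_mul_div]
    refine div_le_div_of_nonneg_right ?_ (by positivity)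
    nlinarith [sq_nonneg (d + ε)]
  have q3 : 2 * (2 * ε - d) ^ 2 / (1 - m) ^ 2 ≤ 16 / (1 - m) ^ 2 * (d ^ 2 + ε) := by
    rw [div_mul_eq_mul_div]
    refine div_le_div_of_nonneg_right ?_ (by positivity)
    nlinarith [sq_nonneg (d + 2 * ε), sq_nonneg d]
  have q1 : 2 * d ^ 2 / m ^ 2 ≤ 2 / m ^ 2 * (d ^ 2 + ε) := by
    rw [div_mul_eq_mul_div]
    gcongr
    linarith
  have q4 : |c * ε| ≤ |c| * (d ^ 2 + ε) := by
    rw [abs_mul, abs_of_nonneg hε]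
    gcongr
    nlinarith [sq_nonneg d]
  have hid : Real.log (m + d) + Real.log (m + d - ε) - Real.log (1 - (m + d) + 2 * ε) -
        4 * J * (m + d) + 4 * J * ε - 2 * (h - J) - 2 * d / v + 2 * ε / v =
      (Real.log (m + d) - Real.log m - d / m) +
      (Real.log (m + d - ε) - Real.log m - (d - ε) / m) -
      (Real.log (1 - (m + d) + 2 * ε) - Real.log (1 - m) - (2 * ε - d) / (1 - m)) + c * ε := by
    rw [hc]
    linear_combination hstat + d * hcurv
  rw [hid]
  rw [abs_le] at b1 b2 b3 q4 ⊢
  have e : (6 / m ^ 2 + 16 / (1 - m) ^ 2 + |c|) * (d ^ 2 + ε) =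
    2 / m ^ 2 * (d ^ 2 + ε) + 4 / m ^ 2 * (d ^ 2 + ε) + 16 / (1 - m) ^ 2 * (d ^ 2 + ε) +
      |c| * (d ^ 2 + ε) := by ring
  rw [e]
  constructor <;> linarith [b1.1, b1.2, b2.1, b2.2, b3.1, b3.2, q4.1, q4.2]

lemma abs_sub_le_mul_of_step {f : ℕ → ℝ} {B : ℝ} (a b : ℕ)
    (hf : ∀ i, min a b ≤ i → i < max a b → |f (i + 1) - f i| ≤ B) :
    |f a - f b| ≤ |(a : ℝ) - b| * B := by
  wlog hab : a ≤ b generalizing a b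
  · rw [abs_sub_comm, abs_sub_comm (a : ℝ)]
    exact this b a (by rwa [min_comm, max_comm]) (by omega)
  have h := dist_le_Ico_sum_of_dist_le (f := f) hab (d := fun _ => B) fun {i} h1 h2 => by
    rw [dist_comm, Real.dist_eq]
    exact hf i (by simpa [hab] using h1) (by simpa [hab] using h2)
  rw [Real.dist_eq, Finset.sum_const, Nat.card_Ico, nsmul_eq_mul, Nat.cast_sub hab] at h
  rwa [abs_sub_comm (a : ℝ), abs_of_nonneg (a := (b : ℝ) - a)
    (sub_nonneg.2 (by exact_mod_cast hab))]

/-- The logarithmic weight corrected by its Gaussian approximation around `m`. -/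
noncomputable def logDefect (J h m v : ℝ) (N j : ℕ) : ℝ :=
  Real.log (gibbsWeight N J h j) + N * (monDens N j - m) ^ 2 / (2 * v)

lemma monDens_succ {N : ℕ} (hN : 1 ≤ N) (j : ℕ) :
    monDens N (j + 1) = monDens N j - 2 * (1 / N) := by
  have hN' : (0 : ℝ) < N := by exact_mod_cast hN
  rw [monDens, monDens]
  push_cast
  field_simp
  ring

lemma monDens_antitone {N : ℕ} {i j : ℕ} (hij : i ≤ j) : monDens N j ≤ monDens N i := by
  have h : (i : ℝ) ≤ j := by exact_mod_cast hij
  unfold monDens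
  gcongr

lemma exists_logDefect_bound {J h m v : ℝ} (hv : 0 < v) (hm0 : 0 < m) (hm1 : m < 1)
    (hstat : 2 * Real.log m - Real.log (1 - m) = 4 * J * m + 2 * (h - J))
    (hcurv : 2 / m + 1 / (1 - m) - 4 * J = 2 / v) :
    ∃ δ C : ℝ, 0 < δ ∧ 0 < C ∧ ∃ N₀ : ℕ, ∀ N : ℕ, N₀ ≤ N → 1 ≤ N → ∀ i j : ℕ,
      2 * i ≤ N → 2 * j ≤ N → |monDens N i - m| ≤ 2 * (1 / N) → |monDens N j - m| ≤ δ →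
      |logDefect J h m v N j - logDefect J h m v N i| ≤
        C * (1 + |√N * (monDens N j - m)| ^ 3) / √N := by
  obtain ⟨δ, C, hδ, hC, hstep⟩ := exists_log_ratio_bound hm0 hm1 hstat hcurv
  obtain ⟨N₀, hN₀⟩ := exists_nat_gt (4 / δ)
  refine ⟨δ / 2, 15 * C, by positivity, by positivity, N₀, fun N hN hN1 i j hi hj hmi hmj => ?_⟩
  have hN' : (0 : ℝ) < N := by exact_mod_cast hN1
  have hNδ : 1 / (N : ℝ) ≤ δ / 4 := by
    have h1 : 4 / δ ≤ N := hN₀.le.trans (by exact_mod_cast hN)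
    rw [div_le_iff₀ hδ] at h1
    rw [div_le_div_iff₀ hN' (by norm_num)]
    linarith
  have hNinv : 0 < 1 / (N : ℝ) := by positivity
  set D := |monDens N j - m| + 2 * (1 / N) with hD
  have hDδ : D ≤ δ := by linarith
  have hbound := abs_sub_le_mul_of_step (f := logDefect J h m v N)
    (B := C * (D ^ 2 + 1 / N)) j i (by
      intro r hr1 hr2
      have hr3 : 2 * (r + 1) ≤ N := by
        rcases lt_max_iff.1 hr2 with h' | h' <;> omega
      have hd : |monDens N r - m| ≤ D := by
        have hmi' := abs_le.1 hmi
        have hj1 := neg_abs_le (monDens N j - m)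
        have hj2 := le_abs_self (monDens N j - m)
        have h0 := abs_nonneg (monDens N j - m)
        rw [abs_le]
        constructor
        · rcases lt_max_iff.1 hr2 with h' | h'
          · have := monDens_antitone (N := N) h'.le
            linarith
          · have := monDens_antitone (N := N) h'.le
            linarith
        · rcases min_le_iff.1 hr1 with h' | h'
          · have := monDens_antitone (N := N) h'
            linarith
          · have := monDens_antitone (N := N) h'
            linarith
      have hs := hstep (monDens N r - m) (1 / N) (hd.trans hDδ) hNinv.le (by linarith)
      have hrat := log_gibbsWeight_succ_sub J h hN1 hr3
      have e : logDefect J h m v N (r + 1) - logDefect J h m v N r =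
          (Real.log (gibbsWeight N J h (r + 1)) - Real.log (gibbsWeight N J h r)) -
            2 * (monDens N r - m) / v + 2 * (1 / N) / v := by
        unfold logDefect
        rw [monDens_succ hN1]
        field_simp
        ring
      rw [e, hrat]
      rw [add_sub_cancel] at hs
      refine hs.trans ?_
      have : (monDens N r - m) ^ 2 ≤ D ^ 2 := by
        rw [← sq_abs]
        exact pow_le_pow_left₀ (abs_nonneg _) hd 2
      gcongr)
  have hdist : |(j : ℝ) - i| ≤ N / 2 * D := by
    have e : (j : ℝ) - i = N / 2 * ((monDens N i - m) - (monDens N j - m)) := by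
      rw [monDens, monDens]
      field_simp
      ring
    rw [e, abs_mul, abs_of_pos (by positivity : (0 : ℝ) < N / 2)]
    gcongr
    exact (abs_sub _ _).trans (by linarith)
  have hs0 : 0 < √(N : ℝ) := Real.sqrt_pos.2 hN'
  have hs1 : 1 ≤ √(N : ℝ) := Real.one_le_sqrt.2 (by exact_mod_cast hN1)
  have hss : √(N : ℝ) ^ 2 = N := Real.sq_sqrt hN'.le
  set s := √(N : ℝ) with hs
  set T := |s * (monDens N j - m)| with hT
  have hT0 : 0 ≤ T := abs_nonneg _
  have hsD : s * D ≤ T + 2 := by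
    rw [hT, abs_mul, abs_of_pos hs0, hD, ← hss]
    have : s * (2 * (1 / s ^ 2)) ≤ 2 := by
      field_simp
      linarith
    linarith
  have hD0 : 0 ≤ D := by positivity
  have hfin : N / 2 * D * (C * (D ^ 2 + 1 / N)) = C / 2 * ((s * D) ^ 3 + s * D) / s := by
    rw [← hss]
    field_simp
  calc |logDefect J h m v N j - logDefect J h m v N i|
      ≤ |(j : ℝ) - i| * (C * (D ^ 2 + 1 / N)) := hbound
    _ ≤ N / 2 * D * (C * (D ^ 2 + 1 / N)) := by gcongr
    _ = C / 2 * ((s * D) ^ 3 + s * D) / s := hfin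
    _ ≤ C / 2 * ((T + 2) ^ 3 + (T + 2)) / s := by gcongr
    _ ≤ C / 2 * (30 * (1 + T ^ 3)) / s := by
        gcongr
        nlinarith [mul_nonneg hT0 (sq_nonneg (T - 1)), sq_nonneg (T - 1)]
    _ = 15 * C * (1 + T ^ 3) / s := by ring

lemma exists_gaussDens_perturbation_bound {v C δ : ℝ} (hv : 0 < v) (hC : 0 < C)
    (hCδ : C * δ ≤ 1 / (4 * v)) :
    ∃ K : ℝ, 0 < K ∧ ∀ s t E : ℝ, 1 ≤ s → |t| ≤ δ * s → |E| ≤ C * (1 + |t| ^ 3) / s →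
      |gaussDens v t * Real.exp E - gaussDens v t| ≤ K / s / (1 + t ^ 2) := by
  obtain ⟨C', hC', hdecay⟩ := exists_gaussian_decay (c := 1 / (4 * v)) (by positivity)
  refine ⟨(√(2 * π * v))⁻¹ * C * Real.exp C * C', by positivity, fun s t E hs ht hE => ?_⟩
  have hs0 : 0 < s := by linarith
  have hE' : |E| ≤ C + t ^ 2 / (4 * v) := by
    refine hE.trans ?_
    rw [mul_add, mul_one, add_div]
    refine add_le_add (div_le_self hC.le hs) ?_
    rw [div_le_iff₀ hs0]
    calc C * |t| ^ 3 = C * t ^ 2 * |t| := by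
          rw [← sq_abs]
          ring
      _ ≤ C * t ^ 2 * (δ * s) := by gcongr
      _ = C * δ * (t ^ 2 * s) := by ring
      _ ≤ 1 / (4 * v) * (t ^ 2 * s) := by gcongr
      _ = t ^ 2 / (4 * v) * s := by ring
  have hexp : |Real.exp E - 1| ≤ |E| * Real.exp |E| := by
    have h1 := Real.add_one_le_exp (-E)
    have h2 := Real.add_one_le_exp E
    have h3 : Real.exp E * Real.exp (-E) = 1 := by
      rw [← Real.exp_add, add_neg_cancel, Real.exp_zero]
    have h4 := Real.exp_pos E
    rcases le_total 0 E with h0 | h0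
    · rw [abs_of_nonneg h0, abs_of_nonneg (by linarith)]
      nlinarith
    · rw [abs_of_nonpos h0, abs_of_nonpos (by linarith [Real.exp_le_one_iff.2 h0])]
      have h5 := Real.one_le_exp (show 0 ≤ -E by linarith)
      nlinarith
  have hg := gaussDens_nonneg v t
  calc |gaussDens v t * Real.exp E - gaussDens v t|
      = gaussDens v t * |Real.exp E - 1| := by
        rw [← abs_of_nonneg hg, ← abs_mul, abs_of_nonneg hg, mul_sub, mul_one]
    _ ≤ gaussDens v t * (C * (1 + |t| ^ 3) / s * Real.exp (C + t ^ 2 / (4 * v))) := by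
        gcongr
        exact hexp.trans (by gcongr)
    _ = (√(2 * π * v))⁻¹ * C * Real.exp C / s *
          ((1 + |t| ^ 3) * Real.exp (-(1 / (4 * v)) * t ^ 2)) := by
        have : Real.exp (-(1 / (4 * v)) * t ^ 2) =
            Real.exp (-t ^ 2 / (2 * v)) * Real.exp (t ^ 2 / (4 * v)) := by
          rw [← Real.exp_add]
          congr 1
          field_simp
          ring
        rw [this, gaussDens, Real.exp_add]
        ring
    _ ≤ (√(2 * π * v))⁻¹ * C * Real.exp C / s * (C' / (1 + t ^ 2)) := by
        gcongr
        exact hdecay t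
    _ = _ := by ring

lemma exists_gaussDens_tail_bound {v δ : ℝ} (hv : 0 < v) (hδ : 0 < δ) :
    ∃ K : ℝ, 0 < K ∧ ∀ s t : ℝ, 0 < s → δ * s ≤ |t| →
      gaussDens v t ≤ K / s / (1 + t ^ 2) := by
  obtain ⟨C, hC, hdecay⟩ := exists_gaussian_decay (c := 1 / (2 * v)) (by positivity)
  refine ⟨(√(2 * π * v))⁻¹ * C / δ, by positivity, fun s t hs ht => ?_⟩
  have hcube : δ * s ≤ 1 + |t| ^ 3 := by
    nlinarith [mul_nonneg (abs_nonneg t) (sq_nonneg (|t| - 1)), sq_nonneg (|t| - 1)]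
  have e : gaussDens v t = (√(2 * π * v))⁻¹ * Real.exp (-(1 / (2 * v)) * t ^ 2) := by
    rw [gaussDens]
    congr 2
    ring
  calc gaussDens v t
      = (√(2 * π * v))⁻¹ / (δ * s) * (δ * s * Real.exp (-(1 / (2 * v)) * t ^ 2)) := by
        rw [e]
        field_simp
    _ ≤ (√(2 * π * v))⁻¹ / (δ * s) * ((1 + |t| ^ 3) * Real.exp (-(1 / (2 * v)) * t ^ 2)) := by
        gcongr
    _ ≤ (√(2 * π * v))⁻¹ / (δ * s) * (C / (1 + t ^ 2)) := by
        gcongr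
        exact hdecay t
    _ = _ := by
        field_simp

lemma exists_pow_mul_exp_bound {c : ℝ} (hc : 0 < c) :
    ∃ K : ℝ, 0 < K ∧ ∀ N : ℕ, ((N : ℝ) + 1) ^ 5 * Real.exp (-(c * N)) ≤ K := by
  refine ⟨120 / c ^ 5 * Real.exp c, by positivity, fun N => ?_⟩
  have h := Real.pow_div_factorial_le_exp (c * (N + 1)) (by positivity) 5
  have h5 : ((Nat.factorial 5 : ℕ) : ℝ) = 120 := by norm_num [Nat.factorial]
  rw [h5, mul_pow] at h
  have h' : ((N : ℝ) + 1) ^ 5 ≤ 120 / c ^ 5 * Real.exp (c * (N + 1)) := by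
    rw [div_mul_eq_mul_div, le_div_iff₀ (by positivity)]
    linarith
  calc ((N : ℝ) + 1) ^ 5 * Real.exp (-(c * N))
      ≤ 120 / c ^ 5 * Real.exp (c * (N + 1)) * Real.exp (-(c * N)) := by gcongr
    _ = 120 / c ^ 5 * Real.exp c := by
        rw [mul_assoc, ← Real.exp_add]
        ring_nf

lemma exp_neg_logDefect_mul_gibbsWeight_le (J h m : ℝ) {v : ℝ} (hv : 0 < v) {N i j : ℕ}
    (hN : 1 ≤ N) (hi : 2 * i ≤ N) (hj : 2 * j ≤ N) :
    Real.exp (-logDefect J h m v N i) * gibbsWeight N J h j ≤ ((N : ℝ) + 1) ^ 4 *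
      Real.exp (N * (rateFun J h (monDens N j) - rateFun J h (monDens N i))) := by
  have hle := gibbsWeight_le_mul J h hN hi hj
  have hi' : Real.exp (-logDefect J h m v N i) * gibbsWeight N J h i ≤ 1 := by
    rw [← Real.exp_log (gibbsWeight_pos N J h i), ← Real.exp_add, Real.exp_le_one_iff, logDefect]
    have : 0 ≤ N * (monDens N i - m) ^ 2 / (2 * v) := by positivity
    linarith
  refine (mul_le_mul_of_nonneg_left hle (Real.exp_pos _).le).trans ?_
  rw [← mul_assoc]
  exact mul_le_of_le_one_left (by positivity) hi'

set_option maxHeartbeats 600000 in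
/-- The scaled weights of the configurations with density in `S` are close to a Gaussian density,
provided `S` is a neighbourhood of the stationary density `m` on which `rateFun` is uniquely
maximized at `m`. -/
lemma exists_scaled_gibbsWeight_bound {J h m v : ℝ} (hv : 0 < v) (hm0 : 0 < m) (hm1 : m < 1)
    (hstat : 2 * Real.log m - Real.log (1 - m) = 4 * J * m + 2 * (h - J))
    (hcurv : 2 / m + 1 / (1 - m) - 4 * J = 2 / v)
    {S : Set ℝ} (hS : S ∈ nhds m)
    (hgap : ∀ δ, 0 < δ → ∃ c, 0 < c ∧ ∀ x ∈ Set.Icc (0 : ℝ) 1, x ∈ S → δ ≤ |x - m| →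
      rateFun J h x ≤ rateFun J h m - c) :
    ∃ (K : ℝ) (N₀ : ℕ), 0 < K ∧ ∀ N : ℕ, N₀ ≤ N → 1 ≤ N → ∃ A : ℝ, 0 < A ∧ ∀ j, 2 * j ≤ N →
      |A * S.indicator (fun _ => gibbsWeight N J h j) (monDens N j) -
          gaussDens v (√N * (monDens N j - m))| ≤
        K * (1 / √N / (1 + (√N * (monDens N j - m)) ^ 2) + 1 / (N + 1)) := by
  obtain ⟨δ₁, C, hδ₁, hC, N₁, hdef⟩ := exists_logDefect_bound hv hm0 hm1 hstat hcurv
  obtain ⟨δ₀, hδ₀, hball⟩ := Metric.mem_nhds_iff.1 hS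
  obtain ⟨δ, hδ, hδ1, hδ0, hCδ⟩ : ∃ δ, 0 < δ ∧ δ ≤ δ₁ ∧ δ < δ₀ ∧ C * δ ≤ 1 / (4 * v) := by
    refine ⟨min δ₁ (min (δ₀ / 2) (1 / (4 * v) / C)), by positivity, min_le_left _ _, ?_, ?_⟩
    · have := (min_le_right δ₁ _).trans (min_le_left (δ₀ / 2) (1 / (4 * v) / C))
      linarith
    · rw [mul_comm, ← le_div_iff₀ hC]
      exact (min_le_right _ _).trans (min_le_right _ _)
  obtain ⟨K₁, hK₁, hnear⟩ := exists_gaussDens_perturbation_bound hv hC hCδ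
  obtain ⟨K₂, hK₂, htail⟩ := exists_gaussDens_tail_bound hv hδ
  obtain ⟨c, hc, hfar⟩ := hgap δ hδ
  obtain ⟨K₃, hK₃, hpow⟩ := exists_pow_mul_exp_bound (half_pos hc)
  obtain ⟨ε, hε, hcont⟩ := Metric.continuousAt_iff.1
    ((continuous_rateFun J h).continuousAt (x := m)) (c / 2) (half_pos hc)
  set σ := (√(2 * π * v))⁻¹ with hσ
  have hσ0 : 0 < σ := by positivity
  refine ⟨K₁ + K₂ + σ * K₃, max N₁ (⌈2 / ε⌉₊ + 1), by positivity, fun N hN hN1 => ?_⟩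
  have hN' : (0 : ℝ) < N := by exact_mod_cast hN1
  have hNε : 2 / N < ε := by
    have h1 : ⌈2 / ε⌉₊ + 1 ≤ N := (le_max_right _ _).trans hN
    have h2 : ((⌈2 / ε⌉₊ : ℕ) : ℝ) + 1 ≤ N := by exact_mod_cast h1
    have h3 := Nat.le_ceil (2 / ε)
    rw [div_lt_comm₀ hN' hε]
    linarith
  set i := ⌊N * (1 - m) / 2⌋₊ with hi
  have hi1 : (i : ℝ) ≤ N * (1 - m) / 2 :=
    Nat.floor_le (div_nonneg (mul_nonneg hN'.le (by linarith)) zero_le_two)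
  have hi2 : N * (1 - m) / 2 < (i : ℝ) + 1 := Nat.lt_floor_add_one _
  have hiN : 2 * i ≤ N := by
    have : (2 : ℝ) * i ≤ N := by nlinarith
    exact_mod_cast this
  have hdi0 : 0 ≤ monDens N i - m := by
    rw [monDens, sub_nonneg, le_div_iff₀ hN']
    linarith
  have hdi1 : monDens N i - m ≤ 2 / N := by
    rw [monDens, div_sub' hN'.ne']
    gcongr
    linarith
  have hrate : rateFun J h m - c / 2 ≤ rateFun J h (monDens N i) := by
    have := hcont (x := monDens N i) (by
      rw [Real.dist_eq, abs_of_nonneg hdi0]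
      linarith)
    rw [Real.dist_eq] at this
    have := (abs_lt.1 this).1
    linarith
  have hs1 : 1 ≤ √(N : ℝ) := Real.one_le_sqrt.2 (by exact_mod_cast hN1)
  have hs0 : 0 < √(N : ℝ) := by linarith
  have hss : √(N : ℝ) ^ 2 = N := Real.sq_sqrt hN'.le
  set L := logDefect J h m v N with hL
  refine ⟨σ * Real.exp (-L i), by positivity, fun j hj => ?_⟩
  set t := √(N : ℝ) * (monDens N j - m) with ht
  have habs : |t| = |monDens N j - m| * √(N : ℝ) := by
    rw [ht, abs_mul, abs_of_pos hs0, mul_comm]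
  have htarget : ∀ K', K' ≤ K₁ + K₂ → 0 ≤ K' →
      K' / √(N : ℝ) / (1 + t ^ 2) + σ * K₃ / (N + 1) ≤
        (K₁ + K₂ + σ * K₃) * (1 / √(N : ℝ) / (1 + t ^ 2) + 1 / (N + 1)) := by
    intro K' h1 h2
    have e1 : K' / √(N : ℝ) / (1 + t ^ 2) = K' * (1 / √(N : ℝ) / (1 + t ^ 2)) := by ring
    have e2 : σ * K₃ / ((N : ℝ) + 1) = σ * K₃ * (1 / (N + 1)) := by ring
    rw [e1, e2, mul_add]
    have h3 := mul_pos hσ0 hK₃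
    exact add_le_add (mul_le_mul_of_nonneg_right (by linarith) (by positivity))
      (mul_le_mul_of_nonneg_right (by linarith) (by positivity))
  rcases le_or_gt |monDens N j - m| δ with hd | hd
  · have hmem : monDens N j ∈ S := hball (by
      rw [Metric.mem_ball, Real.dist_eq]
      linarith)
    have hE := hdef N ((le_max_left _ _).trans hN) hN1 i j hiN hj (by
      rw [abs_of_nonneg hdi0]
      linarith [show 2 * (1 / (N : ℝ)) = 2 / N by ring]) (hd.trans hδ1)
    have hn := hnear (√N) t (L j - L i) hs1 (by
      rw [habs]
      gcongr) hE
    have hw : σ * Real.exp (-L i) * gibbsWeight N J h j = gaussDens v t * Real.exp (L j - L i) := by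
      have e : gibbsWeight N J h j = Real.exp (L j) * Real.exp (-t ^ 2 / (2 * v)) := by
        rw [← Real.exp_add, ← Real.exp_log (gibbsWeight_pos N J h j), hL, logDefect, ht, mul_pow,
          hss]
        congr 1
        ring
      rw [e, gaussDens, sub_eq_add_neg, Real.exp_add]
      ring
    rw [Set.indicator_of_mem hmem, hw]
    refine hn.trans (le_trans ?_ (htarget K₁ (by linarith) hK₁.le))
    exact le_add_of_nonneg_right (by positivity)
  · have hg := htail (√N) t hs0 (by
      rw [habs]
      gcongr)
    have hg0 := gaussDens_nonneg v t
    have hw0 : 0 ≤ σ * Real.exp (-L i) * S.indicator (fun _ => gibbsWeight N J h j) (monDens N j) :=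
      mul_nonneg (by positivity) (Set.indicator_nonneg (fun _ _ => (gibbsWeight_pos N J h j).le) _)
    have hw1 : σ * Real.exp (-L i) * S.indicator (fun _ => gibbsWeight N J h j) (monDens N j) ≤
        σ * K₃ / (N + 1) := by
      by_cases hmem : monDens N j ∈ S
      · rw [Set.indicator_of_mem hmem]
        have hr := hfar _ (monDens_mem_Icc hN1 hj) hmem hd.le
        have hexp : N * (rateFun J h (monDens N j) - rateFun J h (monDens N i)) ≤ -(c / 2 * N) := by
          rw [mul_comm (c / 2), ← mul_neg]
          exact mul_le_mul_of_nonneg_left (by linarith) hN'.le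
        calc σ * Real.exp (-L i) * gibbsWeight N J h j
            = σ * (Real.exp (-L i) * gibbsWeight N J h j) := mul_assoc _ _ _
          _ ≤ σ * (((N : ℝ) + 1) ^ 4 * Real.exp (-(c / 2 * N))) :=
              mul_le_mul_of_nonneg_left ((exp_neg_logDefect_mul_gibbsWeight_le J h m hv hN1 hiN
                hj).trans (mul_le_mul_of_nonneg_left (Real.exp_le_exp.2 hexp) (by positivity)))
                hσ0.le
          _ = σ * (((N : ℝ) + 1) ^ 5 * Real.exp (-(c / 2 * N))) / (N + 1) := by
              field_simp
          _ ≤ σ * K₃ / (N + 1) := by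
              have := hpow N
              gcongr
      · rw [Set.indicator_of_notMem hmem, mul_zero]
        positivity
    have hT := htarget K₂ (by linarith) hK₂.le
    have hK₂' : 0 ≤ K₂ / √(N : ℝ) / (1 + t ^ 2) := by positivity
    have hK₃' : 0 ≤ σ * K₃ / ((N : ℝ) + 1) := by positivity
    rw [abs_le]
    constructor <;> linarith

lemma exists_sum_ratio_bound {J h m v : ℝ} (hv : 0 < v) (hm0 : 0 < m) (hm1 : m < 1)
    (hstat : 2 * Real.log m - Real.log (1 - m) = 4 * J * m + 2 * (h - J))
    (hcurv : 2 / m + 1 / (1 - m) - 4 * J = 2 / v)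
    {S : Set ℝ} (hS : S ∈ nhds m)
    (hgap : ∀ δ, 0 < δ → ∃ c, 0 < c ∧ ∀ x ∈ Set.Icc (0 : ℝ) 1, x ∈ S → δ ≤ |x - m| →
      rateFun J h x ≤ rateFun J h m - c) :
    ∃ (K : ℝ) (N₀ : ℕ), 0 < K ∧ ∀ N : ℕ, N₀ ≤ N → 1 ≤ N → ∀ z : ℝ,
      |(∑ j ∈ range (N / 2 + 1) with √N * (monDens N j - m) ≤ z,
          S.indicator (fun _ => gibbsWeight N J h j) (monDens N j)) /
          (∑ j ∈ range (N / 2 + 1), S.indicator (fun _ => gibbsWeight N J h j) (monDens N j)) -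
        gaussCDF v z| ≤ K / √N := by
  obtain ⟨K, N₁, hK, hweight⟩ :=
    exists_scaled_gibbsWeight_bound hv hm0 hm1 hstat hcurv hS hgap
  obtain ⟨C, hC, hcell⟩ := exists_gaussCDF_cell_bound hv
  have h1m : 0 < 1 - m := by linarith
  set σ := (√(2 * π * v))⁻¹ with hσ
  have hσ0 : 0 < σ := by positivity
  set K' := 2 * ((K + C) * (3 * π)) + 2 * K + 2 * σ + v / m ^ 2 + v / (1 - m) ^ 2 with hK'
  have hK'0 : 0 < K' := by positivity
  refine ⟨6 * K', max N₁ (max 4 ⌈(4 * K') ^ 2⌉₊), by positivity, fun N hN hN1 z => ?_⟩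
  simp only [max_le_iff] at hN
  obtain ⟨hN₁, hN4, hNK⟩ := hN
  have hN' : (0 : ℝ) < N := by exact_mod_cast hN1
  obtain ⟨A, hA, hw⟩ := hweight N hN₁ hN1
  set s := √(N : ℝ) with hs
  have hss : s ^ 2 = N := Real.sq_sqrt hN'.le
  have hs2 : 2 ≤ s := Real.le_sqrt_of_sq_le (by
    norm_num
    exact_mod_cast hN4)
  have hs0 : 0 < s := by linarith
  have hη0 : 0 < 2 / s := by positivity
  have hη1 : 2 / s ≤ 1 := (div_le_one hs0).2 hs2
  have hsK : 4 * K' ≤ s := Real.le_sqrt_of_sq_le ((Nat.le_ceil _).trans (by exact_mod_cast hNK))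
  have hpos : ∀ j : ℕ, s * (monDens N j - m) = s * (1 - m) - 2 / s * j := by
    intro j
    rw [monDens, ← hss]
    field_simp
    ring
  set ind : ℕ → ℝ := fun j => S.indicator (fun _ => gibbsWeight N J h j) (monDens N j) with hind
  set b : ℕ → ℝ := fun j => (K + C) * (2 / s) * (2 / s / (1 + (s * (1 - m) - 2 / s * j) ^ 2)) +
    2 / s * K * (1 / (N + 1)) with hb
  have hbound : ∀ j ∈ range (N / 2 + 1),
      |2 / s * A * ind j - (gaussCDF v (s * (1 - m) - 2 / s * j) -
        gaussCDF v (s * (1 - m) - 2 / s * j - 2 / s))| ≤ b j := by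
    intro j hj
    have hj' : 2 * j ≤ N := by
      have := mem_range.1 hj
      omega
    have h1 := hw j hj'
    rw [hpos] at h1
    set t := s * (1 - m) - 2 / s * j with ht
    have h2 := hcell t (2 / s) hη0 hη1
    have h3 : |2 / s * A * ind j - 2 / s * gaussDens v t| ≤
        2 / s * (K * (1 / s / (1 + t ^ 2) + 1 / (N + 1))) := by
      rw [mul_assoc, ← mul_sub, abs_mul, abs_of_pos hη0]
      exact mul_le_mul_of_nonneg_left h1 hη0.le
    have h4 : 2 / s * (K * (1 / s / (1 + t ^ 2) + 1 / (N + 1))) +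
        C * (2 / s) ^ 2 / (1 + t ^ 2) + K * (2 / s) * (1 / s / (1 + t ^ 2)) = b j := by
      simp only [hb, ← ht]
      ring
    have h5 : 0 ≤ K * (2 / s) * (1 / s / (1 + t ^ 2)) := by positivity
    rw [abs_le] at h2 h3 ⊢
    constructor <;> linarith [h2.1, h2.2, h3.1, h3.2]
  have hsum : ∑ j ∈ range (N / 2 + 1), b j ≤ (2 * ((K + C) * (3 * π)) + 2 * K) / s := by
    have h1 := sum_div_one_add_sq_le hη0 hη1 (s * (1 - m)) (N / 2 + 1)
    have h2 : ((N / 2 + 1 : ℕ) : ℝ) * (1 / (N + 1)) ≤ 1 := by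
      rw [mul_one_div, div_le_one (by positivity)]
      exact_mod_cast Nat.succ_le_succ (Nat.div_le_self N 2)
    rw [hb, sum_add_distrib, ← mul_sum, sum_const, card_range, nsmul_eq_mul]
    calc (K + C) * (2 / s) *
            ∑ j ∈ range (N / 2 + 1), 2 / s / (1 + (s * (1 - m) - 2 / s * j) ^ 2) +
          ((N / 2 + 1 : ℕ) : ℝ) * (2 / s * K * (1 / (N + 1)))
        ≤ (K + C) * (2 / s) * (3 * π) + 2 / s * K * 1 := by
          refine add_le_add (mul_le_mul_of_nonneg_left h1 (by positivity)) ?_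
          rw [mul_left_comm]
          exact mul_le_mul_of_nonneg_left h2 (by positivity)
      _ = _ := by ring
  have hsq : ∀ q : ℝ, 0 < q → v / (s * q) ^ 2 ≤ v / q ^ 2 / s := by
    intro q hq
    rw [div_div]
    refine div_le_div_of_nonneg_left hv.le (by positivity) ?_
    rw [mul_pow, mul_comm]
    exact mul_le_mul_of_nonneg_right (by nlinarith) (by positivity)
  have hleft : gaussCDF v (s * (1 - m) - 2 / s * (N / 2 + 1 : ℕ)) ≤ v / m ^ 2 / s := by
    refine (gaussCDF_le_of_le_neg hv (mul_pos hs0 hm0) ?_).trans (hsq m hm0)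
    have h1 : (N : ℝ) ≤ 2 * ((N / 2 + 1 : ℕ) : ℝ) := by
      exact_mod_cast (show N ≤ 2 * (N / 2 + 1) by omega)
    have h2 : s ≤ 2 / s * ((N / 2 + 1 : ℕ) : ℝ) := by
      rw [div_mul_eq_mul_div, le_div_iff₀ hs0]
      nlinarith
    linarith
  have hright : 1 - gaussCDF v (s * (1 - m)) ≤ v / (1 - m) ^ 2 / s :=
    (one_sub_gaussCDF_le hv (mul_pos hs0 h1m) le_rfl).trans (hsq _ h1m)
  have hfin := abs_ratio_sub_gaussCDF_le hv hη0 (s * (1 - m)) (N / 2 + 1)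
    (fun j => 2 / s * A * ind j) b (e := K' / s) hbound (by
      have : K' / s = (2 * ((K + C) * (3 * π)) + 2 * K) / s + (σ * (2 / s) + v / m ^ 2 / s +
          v / (1 - m) ^ 2 / s) := by
        rw [hK']
        ring
      linarith) (by
      rw [div_le_iff₀ hs0]
      linarith) z
  rw [← mul_sum, ← mul_sum, mul_div_mul_left _ _ (by positivity)] at hfin
  simp only [hpos]
  rw [mul_div_assoc]
  exact hfin

lemma sum_indicator_wDim {N : ℕ} (J h : ℝ) (T : Set ℝ) :
    ∑ D : Dimer N, Set.indicator {D | mDim D ∈ T} (wDim N J h) D =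
      ∑ j ∈ range (N / 2 + 1), T.indicator (fun _ => gibbsWeight N J h j) (monDens N j) := by
  classical
  have h1 := sum_dimer (N := N) fun k =>
    T.indicator (fun x => Real.exp (N * (J * x ^ 2 + bIMD N J h * x))) ((k : ℝ) / N)
  have h2 : ∀ D : Dimer N, Set.indicator {D | mDim D ∈ T} (wDim N J h) D =
      T.indicator (fun x => Real.exp (N * (J * x ^ 2 + bIMD N J h * x)))
        (((monomers D).card : ℝ) / N) := by
    intro D
    simp only [Set.indicator_apply, Set.mem_ofPred_eq, wDim, mDim]
  rw [sum_congr rfl fun D _ => h2 D, h1]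
  refine sum_congr rfl fun j hj => ?_
  have hj' : 2 * j ≤ N := by
    have := mem_range.1 hj
    omega
  simp only [Set.indicator_apply, gibbsWeight, cast_sub_div_eq_monDens hj', mul_ite, mul_zero]

lemma condProbDim_eq_ratio {N : ℕ} (J h m z : ℝ) (hN : 1 ≤ N) (S : Set ℝ) :
    condProbDim N J h (fun D => (((monomers D).card : ℝ) - N * m) / √N ≤ z)
        (fun D => mDim D ∈ S) =
      (∑ j ∈ range (N / 2 + 1) with √N * (monDens N j - m) ≤ z,
        S.indicator (fun _ => gibbsWeight N J h j) (monDens N j)) /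
        ∑ j ∈ range (N / 2 + 1), S.indicator (fun _ => gibbsWeight N J h j) (monDens N j) := by
  classical
  have hN' : (0 : ℝ) < N := by exact_mod_cast hN
  have hs0 : 0 < √(N : ℝ) := Real.sqrt_pos.2 hN'
  have hss : √(N : ℝ) ^ 2 = N := Real.sq_sqrt hN'.le
  have hnum : {D : Dimer N | (((monomers D).card : ℝ) - N * m) / √N ≤ z ∧ mDim D ∈ S} =
      {D | mDim D ∈ {x | √N * (x - m) ≤ z ∧ x ∈ S}} := by
    ext D
    have : (((monomers D).card : ℝ) - N * m) / √N = √N * (mDim D - m) := by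
      rw [div_eq_iff hs0.ne', mul_right_comm, ← sq, hss, mDim]
      field_simp
    simp only [Set.mem_ofPred_eq, this]
  rw [condProbDim, hnum, sum_indicator_wDim, sum_indicator_wDim, sum_filter]
  congr 1
  refine sum_congr rfl fun j _ => ?_
  simp only [Set.indicator_apply, Set.mem_ofPred_eq, ite_and]

lemma condProbDim_mem_Icc {N : ℕ} (J h : ℝ) (A B : Dimer N → Prop) :
    condProbDim N J h A B ∈ Set.Icc (0 : ℝ) 1 := by
  have hpos : ∀ D, 0 ≤ wDim N J h D := fun D => (Real.exp_pos _).le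
  have h0 : ∀ T : Set (Dimer N), 0 ≤ ∑ D, T.indicator (wDim N J h) D :=
    fun T => sum_nonneg fun D _ => Set.indicator_nonneg (fun D _ => hpos D) D
  refine ⟨div_nonneg (h0 _) (h0 _), div_le_one_of_le₀ (sum_le_sum fun D _ => ?_) (h0 _)⟩
  exact Set.indicator_le_indicator_of_subset (fun D hD => hD.2) hpos D

/-- Berry–Esseen bound for the number of monomers conditioned on the density lying in a
neighbourhood `S` of the stationary density `m` on which `rateFun` is uniquely maximized at `m`. -/
lemma exists_condProbDim_bound {J h m v : ℝ} (hv : 0 < v) (hm0 : 0 < m) (hm1 : m < 1)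
    (hstat : 2 * Real.log m - Real.log (1 - m) = 4 * J * m + 2 * (h - J))
    (hcurv : 2 / m + 1 / (1 - m) - 4 * J = 2 / v)
    {S : Set ℝ} (hS : S ∈ nhds m)
    (hgap : ∀ δ, 0 < δ → ∃ c, 0 < c ∧ ∀ x ∈ Set.Icc (0 : ℝ) 1, x ∈ S → δ ≤ |x - m| →
      rateFun J h x ≤ rateFun J h m - c) :
    ∃ K : ℝ, ∀ N : ℕ, 1 ≤ N → ∀ z : ℝ,
      |condProbDim N J h (fun D => (((monomers D).card : ℝ) - N * m) / √N ≤ z)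
          (fun D => mDim D ∈ S) - gaussCDF v z| ≤ K / √N := by
  obtain ⟨K, N₀, hK, hlarge⟩ := exists_sum_ratio_bound hv hm0 hm1 hstat hcurv hS hgap
  refine ⟨K + √N₀, fun N hN z => ?_⟩
  have hs0 : 0 < √(N : ℝ) := Real.sqrt_pos.2 (by exact_mod_cast hN)
  rcases le_total N₀ N with hN₀ | hN₀
  · rw [condProbDim_eq_ratio J h m z hN S]
    refine (hlarge N hN₀ hN z).trans ?_
    exact div_le_div_of_nonneg_right (by linarith [Real.sqrt_nonneg (N₀ : ℝ)]) hs0.le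
  · have hp := condProbDim_mem_Icc J h
      (fun D : Dimer N => (((monomers D).card : ℝ) - N * m) / √N ≤ z) (fun D => mDim D ∈ S)
    have h1 : 1 ≤ (K + √N₀) / √(N : ℝ) := by
      rw [one_le_div hs0]
      have : √(N : ℝ) ≤ √N₀ := Real.sqrt_le_sqrt (by exact_mod_cast hN₀)
      linarith
    have h2 := gaussCDF_nonneg v z
    have h3 := gaussCDF_le_one v z
    rw [abs_le]
    constructor <;> linarith [hp.1, hp.2]

lemma variance_identities {J h m : ℝ} (hJ : 0 ≤ J) (hfix : m = gFun (tauFun J h m))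
    (hc : iteratedDeriv 2 (ptilde J h) m < 0) :
    0 < -(iteratedDeriv 2 (ptilde J h) m)⁻¹ - (2 * J)⁻¹ ∧
      2 / m + 1 / (1 - m) - 4 * J = 2 / (-(iteratedDeriv 2 (ptilde J h) m)⁻¹ - (2 * J)⁻¹) := by
  have hm0 : 0 < m := hfix ▸ gFun_pos _
  have hm1 : m < 1 := by
    rw [hfix]
    exact gFun_lt_one _
  rw [iteratedDeriv_two_ptilde, ← hfix] at hc ⊢
  have hJ0 : 0 < J := by
    rcases hJ.eq_or_lt with h0 | h0
    · rw [← h0] at hc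
      simp at hc
    · exact h0
  have h1 : 0 < 1 - m := by linarith
  have h2 : 0 < 2 - m := by linarith
  set V := 2 * m * (1 - m) / (2 - m) with hV
  have hV0 : 0 < V := by positivity
  have hVJ : 0 < 1 - V * (2 * J) := by
    by_contra hcon
    have : 0 ≤ 2 * J * (V * (2 * J) - 1) := mul_nonneg (by linarith) (by linarith)
    linarith
  have hvar : -(2 * J * (V * (2 * J) - 1))⁻¹ - (2 * J)⁻¹ = V / (1 - V * (2 * J)) := by
    rw [show 2 * J * (V * (2 * J) - 1) = -(2 * J * (1 - V * (2 * J))) by ring, inv_neg, neg_neg,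
      eq_div_iff hVJ.ne', sub_mul, mul_inv, mul_assoc, inv_mul_cancel₀ hVJ.ne']
    field_simp
    ring
  rw [hvar]
  refine ⟨by positivity, ?_⟩
  have hinv : 2 / m + 1 / (1 - m) = 2 / V := by
    rw [hV]
    field_simp
    ring
  rw [hinv]
  field_simp
  ring

lemma stationary_of_fixed {J h m : ℝ} (hfix : m = gFun (tauFun J h m)) :
    2 * Real.log m - Real.log (1 - m) = 4 * J * m + 2 * (h - J) := by
  have h1 := two_mul_log_gFun (tauFun J h m)
  rw [← hfix, tauFun] at h1
  rw [h1]
  ring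

lemma exists_rateFun_gap {J h m : ℝ} {S : Set ℝ} (hS : IsClosed S)
    (hlt : ∀ x ∈ Set.Icc (0 : ℝ) 1, x ∈ S → x ≠ m → rateFun J h x < rateFun J h m) {δ : ℝ}
    (hδ : 0 < δ) :
    ∃ c, 0 < c ∧ ∀ x ∈ Set.Icc (0 : ℝ) 1, x ∈ S → δ ≤ |x - m| →
      rateFun J h x ≤ rateFun J h m - c := by
  have hcpt : IsCompact (Set.Icc (0 : ℝ) 1 ∩ (S ∩ {x | δ ≤ |x - m|})) :=
    isCompact_Icc.inter_right (hS.inter (isClosed_le continuous_const (by fun_prop)))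
  rcases (Set.Icc (0 : ℝ) 1 ∩ (S ∩ {x | δ ≤ |x - m|})).eq_empty_or_nonempty with he | hne
  · refine ⟨1, one_pos, fun x hx hxS hxδ => ?_⟩
    exact absurd (show x ∈ Set.Icc (0 : ℝ) 1 ∩ (S ∩ {x | δ ≤ |x - m|}) from ⟨hx, hxS, hxδ⟩)
      (he ▸ Set.notMem_empty x)
  · obtain ⟨y, ⟨hy, hyS, hyδ⟩, hmax⟩ :=
      hcpt.exists_isMaxOn hne (continuous_rateFun J h).continuousOn
    have hym : y ≠ m := by
      rintro rfl
      rw [Set.mem_ofPred_eq, sub_self, abs_zero] at hyδ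
      linarith
    refine ⟨rateFun J h m - rateFun J h y, sub_pos.2 (hlt y hy hyS hym), fun x hx hxS hxδ => ?_⟩
    have : rateFun J h x ≤ rateFun J h y := hmax ⟨hx, hxS, hxδ⟩
    linarith

lemma exists_condProbDim_bound_of_fixed {J h m : ℝ} (hJ : 0 ≤ J)
    (hfix : m = gFun (tauFun J h m)) (hc : iteratedDeriv 2 (ptilde J h) m < 0)
    {S : Set ℝ} (hS : S ∈ nhds m)
    (hlt : ∀ x ∈ Set.Icc (0 : ℝ) 1, x ∈ closure S → x ≠ m → ptilde J h x < ptilde J h m) :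
    0 < -(iteratedDeriv 2 (ptilde J h) m)⁻¹ - (2 * J)⁻¹ ∧
      ∃ K : ℝ, ∀ N : ℕ, 1 ≤ N → ∀ z : ℝ,
        |condProbDim N J h (fun D => (((monomers D).card : ℝ) - N * m) / √N ≤ z)
            (fun D => mDim D ∈ S) -
          gaussCDF (-(iteratedDeriv 2 (ptilde J h) m)⁻¹ - (2 * J)⁻¹) z| ≤ K / √N := by
  obtain ⟨hv, hcurv⟩ := variance_identities hJ hfix hc
  have hm1 : m < 1 := by
    rw [hfix]
    exact gFun_lt_one _
  refine ⟨hv, exists_condProbDim_bound hv (hfix ▸ gFun_pos _) hm1 (stationary_of_fixed hfix) hcurv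
    hS fun δ hδ => ?_⟩
  obtain ⟨c, hc0, hgap⟩ := exists_rateFun_gap (J := J) (h := h) (m := m) isClosed_closure
    (fun x hx hxS hxm => (rateFun_le_ptilde J h hx).trans_lt
      ((hlt x hx hxS hxm).trans_eq (rateFun_eq_ptilde J h hfix).symm)) hδ
  exact ⟨c, hc0, fun x hx hxS => hgap x hx (subset_closure hxS)⟩

/-- Conditional CLTs along the critical line: if `𝑝̃` has exactly two
maximizers `m₁ < m₂` (each a fixed point of `g ∘ τ` with `𝑝̃'' < 0`), `ξ ∈ (m₁, m₂)`,
and `liminf ℙ(𝒟_ℓ) > 0`, then `λ_ℓ > 0` and given `𝒟_ℓ`, `(|𝓜(D)| - N m_ℓ)/√N` is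
within Kolmogorov distance `K/√N` of `N(0, λ_ℓ)`. -/
theorem stmt2 (J h : ℝ) (hJ : 0 ≤ J) (m1 m2 : ℝ)
    (hm1 : m1 ∈ Set.Icc (0:ℝ) 1) (hm2 : m2 ∈ Set.Icc (0:ℝ) 1) (h12 : m1 < m2)
    (hmax1 : ∀ m ∈ Set.Icc (0:ℝ) 1, ptilde J h m ≤ ptilde J h m1)
    (heq : ptilde J h m2 = ptilde J h m1)
    (honly : ∀ m ∈ Set.Icc (0:ℝ) 1,
      (∀ m' ∈ Set.Icc (0:ℝ) 1, ptilde J h m' ≤ ptilde J h m) → m = m1 ∨ m = m2)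
    (hfix1 : m1 = gFun (tauFun J h m1)) (hfix2 : m2 = gFun (tauFun J h m2))
    (hc1 : iteratedDeriv 2 (ptilde J h) m1 < 0)
    (hc2 : iteratedDeriv 2 (ptilde J h) m2 < 0)
    (ξ : ℝ) (hξ : ξ ∈ Set.Ioo m1 m2)
    (hlim1 : 0 < Filter.liminf (fun N : ℕ => probDim N J h (fun D => mDim D < ξ)) Filter.atTop)
    (hlim2 : 0 < Filter.liminf (fun N : ℕ => probDim N J h (fun D => ξ < mDim D)) Filter.atTop) :
    (0 < -(iteratedDeriv 2 (ptilde J h) m1)⁻¹ - (2*J)⁻¹ ∧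
      ∃ K : ℝ, ∀ N : ℕ, 1 ≤ N → ∀ z : ℝ,
        |condProbDim N J h
            (fun D => (((monomers D).card : ℝ) - N * m1) / Real.sqrt N ≤ z)
            (fun D => mDim D < ξ)
          - gaussCDF (-(iteratedDeriv 2 (ptilde J h) m1)⁻¹ - (2*J)⁻¹) z|
        ≤ K / Real.sqrt N) ∧
    (0 < -(iteratedDeriv 2 (ptilde J h) m2)⁻¹ - (2*J)⁻¹ ∧
      ∃ K : ℝ, ∀ N : ℕ, 1 ≤ N → ∀ z : ℝ,
        |condProbDim N J h
            (fun D => (((monomers D).card : ℝ) - N * m2) / Real.sqrt N ≤ z)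
            (fun D => ξ < mDim D)
          - gaussCDF (-(iteratedDeriv 2 (ptilde J h) m2)⁻¹ - (2*J)⁻¹) z|
        ≤ K / Real.sqrt N) := by
  have hlt : ∀ x ∈ Set.Icc (0 : ℝ) 1, x ≠ m1 → x ≠ m2 → ptilde J h x < ptilde J h m1 := by
    intro x hx h1 h2
    refine (hmax1 x hx).lt_of_ne fun hxe => ?_
    rcases honly x hx fun y hy => (hmax1 y hy).trans_eq hxe.symm with h' | h'
    exacts [h1 h', h2 h']
  have hleft := exists_condProbDim_bound_of_fixed hJ hfix1 hc1 (Iio_mem_nhds hξ.1)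
    fun x hx hxξ hxm => by
      rw [closure_Iio, Set.mem_Iic] at hxξ
      exact hlt x hx hxm (by linarith [hξ.2] : x < m2).ne
  have hright := exists_condProbDim_bound_of_fixed hJ hfix2 hc2 (Ioi_mem_nhds hξ.2)
    fun x hx hxξ hxm => by
      rw [closure_Ioi, Set.mem_Ici] at hxξ
      rw [heq]
      exact hlt x hx (by linarith [hξ.1] : m1 < x).ne' hxm
  simp only [Set.mem_Iio] at hleft
  simp only [Set.mem_Ioi] at hright
  exact ⟨hleft, hright⟩
end

section
/- Let σ be drawn from the weighted Curie–Weiss Gibbs measure and let (σ,σ') be the exchangeable pair obtained by resampling the spins at a uniformly chosen edge. Then E[M − M' | σ] = L₁(m(σ)) + R₁(m(σ)), where R₁ is a function on [0,1] satisfying |R₁(m)| ≤ K/N for all m ∈ [0,1], for a constant K depending only on (J,h) and not on N. -/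
open Real Finset MeasureTheory

/-- The number of dimer configurations with a given set of monomers depends only on the
cardinality of that set. -/
lemma card_filter_monomers_eq_of_card_eq {N : ℕ} {S T : Finset (Fin N)} (hST : S.card = T.card) :
    (univ.filter fun D : Dimer N => monomers D = S).card =
      (univ.filter fun D : Dimer N => monomers D = T).card := by
  obtain ⟨e, rfl⟩ := Equiv.Perm.exists_map_finset_eq S T hST
  refine Finset.card_bij' (fun D _ => ⟨fun i => e (D.1 (e.symm i)), fun i => by simp [D.2]⟩)
    (fun D _ => ⟨fun i => e.symm (D.1 (e i)), fun i => by simp [D.2]⟩) ?_ ?_ ?_ ?_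
  · intro D hD
    simp only [mem_filter, mem_univ, true_and] at hD ⊢
    subst hD
    ext i
    simp [monomers, ← Equiv.eq_symm_apply]
  · intro D hD
    simp only [mem_filter, mem_univ, true_and] at hD ⊢
    ext i
    have := Finset.ext_iff.1 hD (e i)
    simpa [monomers, Equiv.symm_apply_eq] using this
  · intro D _
    ext i
    simp
  · intro D _
    ext i
    simp

/-- Removing the dimer `{u, w}` from a dimer configuration. -/
lemma card_filter_monomers_partner {N : ℕ} {S : Finset (Fin N)} {u w : Fin N}
    (hu : u ∉ S) (hw : w ∉ S) (huw : u ≠ w) :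
    (univ.filter fun D : Dimer N => monomers D = S ∧ D.1 u = w).card =
      (univ.filter fun D : Dimer N => monomers D = insert u (insert w S)).card := by
  refine Finset.card_bij'
    (fun D hD => ⟨fun i => if i = u ∨ i = w then i else D.1 i, fun i => ?_⟩)
    (fun D hD => ⟨fun i => if i = u then w else if i = w then u else D.1 i, fun i => ?_⟩)
    ?_ ?_ ?_ ?_
  · simp only [mem_filter, mem_univ, true_and] at hD
    have h1 := D.2 i
    have h2 := D.2 u
    grind
  · simp only [mem_filter, mem_univ, true_and] at hD
    have h1 := D.2 i
    have h2 : D.1 u = u := by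
      have : u ∈ monomers D := by rw [hD]; simp
      simpa [monomers] using this
    have h3 : D.1 w = w := by
      have : w ∈ monomers D := by rw [hD]; simp
      simpa [monomers] using this
    grind
  · intro D hD
    simp only [mem_filter, mem_univ, true_and] at hD ⊢
    obtain ⟨rfl, hD⟩ := hD
    ext i
    simp only [monomers, mem_filter, mem_univ, true_and, mem_insert]
    grind
  · intro D hD
    simp only [mem_filter, mem_univ, true_and] at hD ⊢
    refine ⟨?_, by simp⟩
    ext i
    have h4 := Finset.ext_iff.1 hD i
    simp only [monomers, mem_filter, mem_univ, true_and, mem_insert] at h4 ⊢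
    grind
  · intro D hD
    simp only [mem_filter, mem_univ, true_and] at hD
    have h2 := D.2 u
    ext i
    grind
  · intro D hD
    simp only [mem_filter, mem_univ, true_and] at hD
    have h2 : D.1 u = u := by
      have : u ∈ monomers D := by rw [hD]; simp
      simpa [monomers] using this
    have h3 : D.1 w = w := by
      have : w ∈ monomers D := by rw [hD]; simp
      simpa [monomers] using this
    ext i
    grind

lemma card_filter_monomers_rec {N : ℕ} {S : Finset (Fin N)} {u v : Fin N}
    (hu : u ∉ S) (hv : v ∉ S) (huv : u ≠ v) :
    (univ.filter fun D : Dimer N => monomers D = S).card =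
      (N - S.card - 1) *
        (univ.filter fun D : Dimer N => monomers D = insert u (insert v S)).card := by
  have hmaps : ∀ D ∈ (univ.filter fun D : Dimer N => monomers D = S),
      D.1 u ∈ (Sᶜ).erase u := by
    intro D hD
    simp only [mem_filter, mem_univ, true_and] at hD
    have h1 := D.2 u
    subst hD
    simp only [monomers, mem_filter, mem_univ, true_and, mem_erase, mem_compl] at hu ⊢
    grind
  rw [Finset.card_eq_sum_card_fiberwise hmaps]
  have hcard : ((Sᶜ).erase u).card = N - S.card - 1 := by
    rw [Finset.card_erase_of_mem (by simpa using hu), Finset.card_compl, Fintype.card_fin]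
  rw [← hcard, ← smul_eq_mul, ← Finset.sum_const]
  refine Finset.sum_congr rfl fun w hw => ?_
  simp only [mem_erase, mem_compl] at hw
  rw [Finset.filter_filter, card_filter_monomers_partner hu hw.2 (Ne.symm hw.1)]
  apply card_filter_monomers_eq_of_card_eq
  rw [card_insert_of_notMem (by simp [hu, Ne.symm hw.1]), card_insert_of_notMem hw.2,
    card_insert_of_notMem (by simp [hu, huv]), card_insert_of_notMem hv]

lemma card_monomers_modEq {N : ℕ} (D : Dimer N) : N ≡ (monomers D).card [MOD 2] := by
  have h := Equiv.Perm.card_fixedPoints_modEq (f := (D.1 : Function.End (Fin N))) (p := 2) (n := 1)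
    (by funext i; exact D.2 i)
  rw [Fintype.card_fin] at h
  refine h.trans ?_
  rw [Fintype.card_subtype]
  rfl

lemma Msum_modEq_of_wConf_ne_zero {N : ℕ} {J h : ℝ} {σ : Config N} (hσ : wConf N J h σ ≠ 0) :
    N ≡ Msum σ [MOD 2] := by
  have hD : Dcount N σ ≠ 0 := by
    intro h0
    simp [wConf, h0] at hσ
  obtain ⟨D, hD⟩ := Finset.card_ne_zero.1 hD
  have := card_monomers_modEq D
  rwa [(mem_filter.1 hD).2] at this

lemma wConf_eq_of_Msum_eq {N : ℕ} {J h : ℝ} {σ σ' : Config N} (hM : Msum σ = Msum σ') :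
    wConf N J h σ = wConf N J h σ' := by
  have hD : Dcount N σ = Dcount N σ' := card_filter_monomers_eq_of_card_eq hM
  simp [wConf, mConf, hD, hM]

lemma wConf_nonneg (N : ℕ) (J h : ℝ) (σ : Config N) : 0 ≤ wConf N J h σ := by
  unfold wConf
  positivity

lemma ASet_upd_true {N : ℕ} (σ : Config N) (u v : Fin N) :
    ASet (upd σ u v true true) = insert u (insert v (ASet (upd σ u v false false))) := by
  ext i
  simp only [ASet, upd, mem_insert]
  grind

lemma Msum_upd {N : ℕ} (σ : Config N) {u v : Fin N} (huv : u ≠ v) (s t : Bool) :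
    Msum (upd σ u v s t) = Msum (upd σ u v false false) + s.toNat + t.toNat := by
  have hu : u ∉ ASet (upd σ u v false false) := by simp [ASet, upd]
  have hv : v ∉ ASet (upd σ u v false false) := by simp [ASet, upd]
  unfold Msum
  cases s <;> cases t
  · simp
  · have : ASet (upd σ u v false true) = insert v (ASet (upd σ u v false false)) := by
      ext i
      simp only [ASet, upd, mem_insert]
      grind
    rw [this, card_insert_of_notMem hv]
    simp
  · have : ASet (upd σ u v true false) = insert u (ASet (upd σ u v false false)) := by
      ext i
      simp only [ASet, upd, mem_insert]
      grind
    rw [this, card_insert_of_notMem hu]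
    simp
  · rw [ASet_upd_true, card_insert_of_notMem (by simp [hu, huv]), card_insert_of_notMem hv]
    simp

lemma upd_self {N : ℕ} (σ : Config N) (u v : Fin N) : upd σ u v (σ u) (σ v) = σ := by
  funext i
  unfold upd
  grind

lemma Msum_le {N : ℕ} (σ : Config N) : Msum σ ≤ N := by
  simpa [Msum] using Finset.card_le_univ (ASet σ)

lemma Msum_add_two_le {N : ℕ} (σ : Config N) {u v : Fin N} (huv : u ≠ v) :
    Msum (upd σ u v false false) + 2 ≤ N := by
  have h1 := Msum_upd σ huv true true
  have h2 := Msum_le (upd σ u v true true)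
  simp at h1
  omega

/-- Flipping two spins from `0` to `1` changes the weight by an explicit factor. -/
lemma wConf_upd_false_mul {N : ℕ} (J h : ℝ) (σ : Config N) {u v : Fin N} (huv : u ≠ v) {r : ℕ}
    (hr : Msum (upd σ u v false false) = r) :
    wConf N J h (upd σ u v false false) * (N * exp (2 * tauFun J h ((r + 1) / N))) =
      (N - r - 1) * wConf N J h (upd σ u v true true) := by
  have hle := Msum_add_two_le σ huv
  have hM : Msum (upd σ u v true true) = r + 2 := by
    rw [Msum_upd σ huv, hr]; simp
  have hD : Dcount N (upd σ u v false false) = (N - r - 1) * Dcount N (upd σ u v true true) := by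
    unfold Dcount
    rw [ASet_upd_true, ← hr]
    exact card_filter_monomers_rec (by simp [ASet, upd]) (by simp [ASet, upd]) huv
  rw [hr] at hle
  have hN : (0 : ℝ) < N := by exact_mod_cast (by omega : 0 < N)
  have hc : ((N - r - 1 : ℕ) : ℝ) = N - r - 1 := by
    rw [Nat.sub_sub, Nat.cast_sub (by omega)]; push_cast; ring
  have hexp : exp (N * (J * (((r + 2 : ℕ) : ℝ) / N) ^ 2 + bIMD N J h * (((r + 2 : ℕ) : ℝ) / N))) =
      exp (N * (J * ((r : ℝ) / N) ^ 2 + bIMD N J h * ((r : ℝ) / N))) *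
        (N * exp (2 * tauFun J h ((r + 1) / N))) := by
    have hlog : (N : ℝ) * exp (2 * tauFun J h ((r + 1) / N)) =
        exp (Real.log N + 2 * tauFun J h ((r + 1) / N)) := by
      rw [Real.exp_add, Real.exp_log hN]
    rw [hlog, ← Real.exp_add]
    congr 1
    unfold bIMD tauFun
    push_cast
    field_simp
    ring
  unfold wConf mConf
  rw [hD, hM, hr, hexp]
  push_cast [hc]
  ring

/-- Twice the probability that a pair of ones is resampled to a pair of zeros, as a function of
the number `k` of ones. -/
noncomputable def downDrift (N : ℕ) (J h k : ℝ) : ℝ :=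
  2 * (N - k + 1) / ((N - k + 1) + N * exp (2 * tauFun J h ((k - 1) / N)))

/-- Twice the probability that a pair of zeros is resampled to a pair of ones, as a function of
the number `k` of ones. -/
noncomputable def upDrift (N : ℕ) (J h k : ℝ) : ℝ :=
  2 * (N * exp (2 * tauFun J h ((k + 1) / N))) /
    ((N - k - 1) + N * exp (2 * tauFun J h ((k + 1) / N)))

lemma sum_qCond_mul_sub {N : ℕ} {J h : ℝ} {σ : Config N} (hσ : wConf N J h σ ≠ 0)
    {u v : Fin N} (huv : u ≠ v) :
    ∑ st : Bool × Bool, qCond N J h σ u v st.1 st.2 *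
        ((Msum σ : ℝ) - (Msum (upd σ u v st.1 st.2) : ℝ)) =
      (if σ u = true ∧ σ v = true then downDrift N J h (Msum σ) else 0) -
        (if σ u = false ∧ σ v = false then upDrift N J h (Msum σ) else 0) := by
  obtain ⟨r, hr⟩ : ∃ r, Msum (upd σ u v false false) = r := ⟨_, rfl⟩
  have h01 := Msum_upd σ huv false true
  have h10 := Msum_upd σ huv true false
  have h11 := Msum_upd σ huv true true
  have hle := Msum_add_two_le σ huv
  have hrec := wConf_upd_false_mul J h σ huv hr
  have hself := upd_self σ u v
  have hpar := Msum_modEq_of_wConf_ne_zero hσ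
  have hpos : 0 < wConf N J h σ := lt_of_le_of_ne (wConf_nonneg _ _ _ _) (Ne.symm hσ)
  simp only [hr, Bool.toNat_true, Bool.toNat_false, add_zero] at h01 h10 h11 hle
  have hN : (0 : ℝ) < N := by exact_mod_cast (by omega : 0 < N)
  have hr2 : (r : ℝ) + 2 ≤ N := by exact_mod_cast hle
  have hz : ∀ s t, ¬ Msum (upd σ u v s t) ≡ Msum σ [MOD 2] →
      wConf N J h (upd σ u v s t) = 0 := by
    intro s t hst
    by_contra hne
    exact hst ((Msum_modEq_of_wConf_ne_zero hne).symm.trans hpar)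
  unfold qCond
  simp only [Fintype.sum_prod_type, Fintype.sum_bool, hr, h01, h10, h11]
  have hE := Real.exp_pos (2 * tauFun J h ((r + 1) / N))
  cases hu : σ u <;> cases hv : σ v <;> rw [hu, hv] at hself
  · have hM : Msum σ = r := by rw [← hself, hr]
    rw [hz true false (by rw [h10, hM, Nat.ModEq]; omega),
      hz false true (by rw [h01, hM, Nat.ModEq]; omega)]
    rw [hself] at hrec ⊢
    have hw : wConf N J h (upd σ u v true true) =
        wConf N J h σ * (N * exp (2 * tauFun J h ((r + 1) / N))) / (N - r - 1) := by
      rw [hrec, mul_div_cancel_left₀]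
      linarith
    have h1 : (0 : ℝ) < N - r - 1 := by linarith
    have h2 : (0 : ℝ) < (N - r - 1) + N * exp (2 * tauFun J h ((r + 1) / N)) := by positivity
    rw [hw, hM]
    simp only [upDrift]
    generalize exp (2 * tauFun J h ((r + 1) / N)) = E at *
    generalize wConf N J h σ = w at *
    simp
    field_simp
    ring
  · have hM : Msum σ = r + 1 := by rw [← hself, h01]
    rw [hz true true (by rw [h11, hM, Nat.ModEq]; omega),
      hz false false (by rw [hr, hM, Nat.ModEq]; omega), hM]
    simp
  · have hM : Msum σ = r + 1 := by rw [← hself, h10]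
    rw [hz true true (by rw [h11, hM, Nat.ModEq]; omega),
      hz false false (by rw [hr, hM, Nat.ModEq]; omega), hM]
    simp
  · have hM : Msum σ = r + 2 := by rw [← hself, h11]
    rw [hz true false (by rw [h10, hM, Nat.ModEq]; omega),
      hz false true (by rw [h01, hM, Nat.ModEq]; omega)]
    rw [hself] at hrec ⊢
    have hw : wConf N J h (upd σ u v false false) =
        (N - r - 1) * wConf N J h σ / (N * exp (2 * tauFun J h ((r + 1) / N))) := by
      rw [← hrec, mul_div_cancel_right₀]
      positivity
    have h1 : (0 : ℝ) < N - r - 1 := by linarith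
    have h2 : (0 : ℝ) < (N - r - 1) + N * exp (2 * tauFun J h ((r + 1) / N)) := by positivity
    have e1 : (N : ℝ) - ((r + 2 : ℕ) : ℝ) + 1 = N - r - 1 := by push_cast; ring
    have e2 : ((r + 2 : ℕ) : ℝ) - 1 = r + 1 := by push_cast; ring
    rw [hw, hM]
    simp only [downDrift, e1, e2]
    generalize exp (2 * tauFun J h ((r + 1) / N)) = E at *
    generalize wConf N J h σ = w at *
    simp
    field_simp
    ring

lemma two_mul_card_filter_cEdges {N : ℕ} (S : Finset (Fin N)) :
    2 * (((cEdges N).filter fun p => p.1 ∈ S ∧ p.2 ∈ S).card : ℝ) =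
      (S.card : ℝ) * (S.card - 1) := by
  have hswap : (S.offDiag.filter fun p => ¬ p.1 < p.2).card =
      (S.offDiag.filter fun p => p.1 < p.2).card := by
    refine Finset.card_bij' (fun p _ => p.swap) (fun p _ => p.swap) ?_ ?_ ?_ ?_
    · intro p hp
      simp only [mem_filter, mem_offDiag, Prod.fst_swap, Prod.snd_swap] at hp ⊢
      grind
    · intro p hp
      simp only [mem_filter, mem_offDiag, Prod.fst_swap, Prod.snd_swap] at hp ⊢
      grind
    · simp
    · simp
  have heq : ((cEdges N).filter fun p => p.1 ∈ S ∧ p.2 ∈ S) =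
      S.offDiag.filter fun p => p.1 < p.2 := by
    ext p
    simp only [cEdges, mem_filter, mem_univ, true_and, mem_offDiag]
    grind
  have hsum := Finset.card_filter_add_card_filter_not (s := S.offDiag) (fun p => p.1 < p.2)
  rw [hswap, offDiag_card, ← heq] at hsum
  have hle : S.card ≤ S.card * S.card := Nat.le_mul_self _
  have := congrArg (Nat.cast : ℕ → ℝ) hsum
  push_cast [Nat.cast_sub hle] at this
  linarith

lemma condE2_eq {N : ℕ} {J h : ℝ} {σ : Config N} (hσ : wConf N J h σ ≠ 0) :
    condE2 N J h (fun σ σ' => (Msum σ : ℝ) - (Msum σ' : ℝ)) σ =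
      ((Msum σ : ℝ) * (Msum σ - 1) * downDrift N J h (Msum σ) -
        ((N : ℝ) - Msum σ) * (N - Msum σ - 1) * upDrift N J h (Msum σ)) / (N * (N - 1)) := by
  have hall := two_mul_card_filter_cEdges (univ : Finset (Fin N))
  have hone := two_mul_card_filter_cEdges (ASet σ)
  have hzero := two_mul_card_filter_cEdges (ASet σ)ᶜ
  have hle := Msum_le σ
  rw [card_compl, Fintype.card_fin] at hzero
  change _ = (((N - Msum σ : ℕ) : ℝ)) * (((N - Msum σ : ℕ) : ℝ) - 1) at hzero
  rw [Nat.cast_sub hle] at hzero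
  change _ = (Msum σ : ℝ) * (Msum σ - 1) at hone
  simp only [mem_univ, and_self, filter_true, card_univ, Fintype.card_fin] at hall
  have hsum : ∑ p ∈ cEdges N, ∑ st : Bool × Bool, qCond N J h σ p.1 p.2 st.1 st.2 *
        ((Msum σ : ℝ) - (Msum (upd σ p.1 p.2 st.1 st.2) : ℝ)) =
      ∑ p ∈ cEdges N, ((if p.1 ∈ ASet σ ∧ p.2 ∈ ASet σ then downDrift N J h (Msum σ) else 0) -
        (if p.1 ∈ (ASet σ)ᶜ ∧ p.2 ∈ (ASet σ)ᶜ then upDrift N J h (Msum σ) else 0)) := by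
    refine Finset.sum_congr rfl fun p hp => ?_
    rw [sum_qCond_mul_sub hσ (ne_of_lt (mem_filter.1 hp).2)]
    simp [ASet]
  unfold condE2
  rw [hsum, Finset.sum_sub_distrib, ← Finset.sum_filter, ← Finset.sum_filter, Finset.sum_const,
    Finset.sum_const, nsmul_eq_mul, nsmul_eq_mul, ← hall, ← hone, ← hzero]
  rw [mul_assoc, mul_assoc, ← mul_sub, mul_div_mul_left _ _ two_ne_zero, div_eq_inv_mul]

lemma abs_exp_sub_one_le_mul_exp_abs (y : ℝ) : |exp y - 1| ≤ |y| * exp |y| := by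
  have h1 := Real.add_one_le_exp y
  have h2 := Real.add_one_le_exp (-y)
  have h3 : exp (-y) * exp y = 1 := by rw [← Real.exp_add]; simp
  have h4 := Real.exp_pos y
  rcases le_total 0 y with hy | hy
  · rw [abs_of_nonneg hy, abs_of_nonneg (by linarith)]
    nlinarith
  · have h5 : 1 ≤ exp (-y) := Real.one_le_exp (by linarith)
    rw [abs_of_nonpos hy, abs_of_nonpos (by linarith [Real.exp_le_one_iff.2 hy])]
    nlinarith

lemma abs_div_add_sub_div_add_le {a a' E E' : ℝ} (ha : 0 ≤ a) (ha' : 0 ≤ a') (hE : 0 < E)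
    (hE' : 0 < E') : |a' / (a' + E') - a / (a + E)| ≤ (|a' - a| + |E' - E|) / E := by
  have hp : 0 < a' + E' := by positivity
  have hq : 0 < a + E := by positivity
  have heq : a' / (a' + E') - a / (a + E) =
      ((a' - a) * (E' / (a' + E')) - (E' - E) * (a' / (a' + E'))) / (a + E) := by
    field_simp
    ring
  have h1 : |E' / (a' + E')| ≤ 1 := by
    rw [abs_of_nonneg (by positivity), div_le_one hp]; linarith
  have h2 : |a' / (a' + E')| ≤ 1 := by
    rw [abs_of_nonneg (by positivity), div_le_one hp]; linarith
  rw [heq, abs_div, abs_of_pos hq]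
  refine div_le_div₀ (by positivity) ?_ hE (by linarith)
  refine (abs_sub _ _).trans ?_
  rw [abs_mul, abs_mul]
  exact add_le_add (mul_le_of_le_one_right (abs_nonneg _) h1)
    (mul_le_of_le_one_right (abs_nonneg _) h2)

/-- Shifting the argument of `a / (a + e^{2τ})` by `d` costs a constant multiple of `|d|`. -/
lemma abs_div_add_exp_tauFun_sub_le {J h x d : ℝ} (hJ : 0 ≤ J) (hx0 : 0 ≤ x) (hx1 : x ≤ 1)
    (hd : |d| ≤ 1) (ha : 0 ≤ 1 - (x + d)) :
    |(1 - (x + d)) / ((1 - (x + d)) + exp (2 * tauFun J h (x + d))) -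
        (1 - x) / ((1 - x) + exp (2 * tauFun J h x))| ≤
      (exp (2 * J - 2 * h) + 4 * J * exp (4 * J)) * |d| := by
  refine (abs_div_add_sub_div_add_le (by linarith) ha (exp_pos _) (exp_pos _)).trans ?_
  have h1 : 1 - (x + d) - (1 - x) = -d := by ring
  have h2 : exp (2 * tauFun J h (x + d)) - exp (2 * tauFun J h x) =
      exp (2 * tauFun J h x) * (exp (4 * J * d) - 1) := by
    rw [mul_sub, ← Real.exp_add, mul_one]
    congr 2
    unfold tauFun
    ring
  have h3 : |exp (4 * J * d) - 1| ≤ 4 * J * exp (4 * J) * |d| := by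
    refine (abs_exp_sub_one_le_mul_exp_abs _).trans ?_
    rw [abs_mul, abs_of_nonneg (by positivity : 0 ≤ 4 * J)]
    have : exp (4 * J * |d|) ≤ exp (4 * J) :=
      Real.exp_le_exp.2 (mul_le_of_le_one_right (by positivity) hd)
    calc 4 * J * |d| * exp (4 * J * |d|) ≤ 4 * J * |d| * exp (4 * J) := by gcongr
      _ = _ := by ring
  have h4 : (exp (2 * tauFun J h x))⁻¹ ≤ exp (2 * J - 2 * h) := by
    rw [← Real.exp_neg]
    apply Real.exp_le_exp.2
    unfold tauFun
    nlinarith [mul_nonneg hJ hx0]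
  rw [h1, h2, abs_neg, abs_mul, abs_of_pos (exp_pos _), add_div,
    mul_div_cancel_left₀ _ (exp_pos _).ne', div_eq_inv_mul, add_mul]
  gcongr

lemma abs_mul_sub_one_div_sub_sq_le {n k : ℝ} (hn : n = 1 ∨ 2 ≤ n) (hk0 : 0 ≤ k) (hk : k ≤ n) :
    |k * (k - 1) / (n * (n - 1)) - (k / n) ^ 2| ≤ 2 / n := by
  rcases hn with rfl | hn
  · simp only [sub_self, mul_zero, div_zero, zero_sub, abs_neg, div_one]
    rw [abs_of_nonneg (by positivity)]
    nlinarith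
  · have h1 : 0 < n - 1 := by linarith
    have heq : k * (k - 1) / (n * (n - 1)) - (k / n) ^ 2 = -(k * (n - k) / (n ^ 2 * (n - 1))) := by
      field_simp
      ring
    have h2 : 0 ≤ n - k := by linarith
    rw [heq, abs_neg, abs_of_nonneg (by positivity), div_le_div_iff₀ (by positivity) (by linarith)]
    have h3 : k * (n - k) ≤ n * n := mul_le_mul hk (by linarith) h2 (by linarith)
    nlinarith [mul_le_mul_of_nonneg_right h3 (by linarith : 0 ≤ n), sq_nonneg n,
      mul_nonneg (sq_nonneg n) (by linarith : 0 ≤ n - 2)]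

lemma abs_mul_sub_mul_le {c c' p p' : ℝ} (hc0 : 0 ≤ c) (hc1 : c ≤ 1) (hp0 : 0 ≤ p')
    (hp1 : p' ≤ 1) : |c' * p' - c * p| ≤ |c' - c| + |p' - p| := by
  have heq : c' * p' - c * p = (c' - c) * p' + c * (p' - p) := by ring
  rw [heq]
  refine (abs_add_le _ _).trans ?_
  rw [abs_mul, abs_mul, abs_of_nonneg hp0, abs_of_nonneg hc0]
  exact add_le_add (mul_le_of_le_one_right (abs_nonneg _) hp1)
    (mul_le_of_le_one_left (abs_nonneg _) hc1)

lemma abs_drift_sub_Lone_le {J h : ℝ} (hJ : 0 ≤ J) {N k : ℕ} (hN : 1 ≤ N) (hk : k ≤ N) :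
    |((k : ℝ) * (k - 1) * downDrift N J h k -
        ((N : ℝ) - k) * (N - k - 1) * upDrift N J h k) / (N * (N - 1)) - Lone J h ((k : ℝ) / N)| ≤
      4 * (2 + (exp (2 * J - 2 * h) + 4 * J * exp (4 * J))) / N := by
  set B := exp (2 * J - 2 * h) + 4 * J * exp (4 * J) with hB
  have hn : (1 : ℝ) ≤ N := by exact_mod_cast hN
  have hn0 : (0 : ℝ) < N := by linarith
  have hn' : (N : ℝ) = 1 ∨ (2 : ℝ) ≤ N := by
    rcases Nat.eq_or_lt_of_le hN with h1 | h1
    · exact Or.inl (by exact_mod_cast h1.symm)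
    · exact Or.inr (by exact_mod_cast h1)
  have hk0 : (0 : ℝ) ≤ k := Nat.cast_nonneg k
  have hkN : (k : ℝ) ≤ N := by exact_mod_cast hk
  obtain ⟨x, hx⟩ : ∃ x : ℝ, x = k / N := ⟨_, rfl⟩
  have hx0 : 0 ≤ x := by rw [hx]; positivity
  have hx1 : x ≤ 1 := by rw [hx, div_le_one hn0]; exact hkN
  have hkx : (k : ℝ) = N * x := by rw [hx]; field_simp
  have hinv : (0 : ℝ) < 1 / N := by positivity
  have hinv1 : (1 : ℝ) / N ≤ 1 := by rw [div_le_one hn0]; exact hn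
  have hBpos : 0 ≤ B := by positivity
  have hdown : |(k : ℝ) * (k - 1) / (N * (N - 1)) * (downDrift N J h k / 2) -
      x ^ 2 * ((1 - x) / ((1 - x) + exp (2 * tauFun J h x)))| ≤ (2 + B) / N := by
    have heq : downDrift N J h k / 2 = (1 - (x + -(1 / N))) /
        ((1 - (x + -(1 / N))) + exp (2 * tauFun J h (x + -(1 / N)))) := by
      have e : ((k : ℝ) - 1) / N = x + -(1 / N) := by rw [hx]; ring
      unfold downDrift
      rw [e]
      generalize exp (2 * tauFun J h (x + -(1 / N))) = E
      have e1 : (N : ℝ) - k + 1 = N * (1 - (x + -(1 / N))) := by rw [hkx]; field_simp; ring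
      rw [e1, ← mul_add, mul_left_comm, mul_div_mul_left _ _ hn0.ne']
      ring
    have ha : 0 ≤ 1 - (x + -(1 / (N : ℝ))) := by linarith
    have hE := exp_pos (2 * tauFun J h (x + -(1 / N)))
    have hshift := abs_div_add_exp_tauFun_sub_le (h := h) hJ hx0 hx1
      (d := -(1 / (N : ℝ))) (by rw [abs_neg, abs_of_pos hinv]; exact hinv1) ha
    rw [abs_neg, abs_of_pos hinv, ← hB] at hshift
    have hcoef := abs_mul_sub_one_div_sub_sq_le hn' hk0 hkN
    rw [← hx] at hcoef
    rw [heq]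
    refine (abs_mul_sub_mul_le (by positivity) (by nlinarith) (by positivity)
      ((div_le_one (by positivity)).2 (by linarith))).trans ?_
    refine (add_le_add hcoef hshift).trans (le_of_eq ?_)
    ring
  have hup : |((N : ℝ) - k) * (N - k - 1) / (N * (N - 1)) * (upDrift N J h k / 2) -
      (1 - x) ^ 2 * (exp (2 * tauFun J h x) / ((1 - x) + exp (2 * tauFun J h x)))| ≤
        (2 + B) / N := by
    rcases Nat.eq_or_lt_of_le hk with hkeq | hlt
    · have h1 : (k : ℝ) = N := by exact_mod_cast hkeq
      have h2 : x = 1 := by rw [hx, h1, div_self hn0.ne']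
      rw [h1, h2]
      simp only [sub_self, zero_mul, zero_div, ne_eq, OfNat.ofNat_ne_zero, not_false_eq_true,
        zero_pow, abs_zero]
      positivity
    have hlt' : (k : ℝ) + 1 ≤ N := by exact_mod_cast hlt
    have hxd : x + 1 / N ≤ 1 := by
      have : x + 1 / N = (k + 1) / N := by rw [hx]; ring
      rw [this, div_le_one hn0]
      exact hlt'
    have heq : upDrift N J h k / 2 = exp (2 * tauFun J h (x + 1 / N)) /
        ((1 - (x + 1 / N)) + exp (2 * tauFun J h (x + 1 / N))) := by
      have e : ((k : ℝ) + 1) / N = x + 1 / N := by rw [hx]; ring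
      unfold upDrift
      rw [e]
      generalize exp (2 * tauFun J h (x + 1 / N)) = E
      have e1 : (N : ℝ) - k - 1 = N * (1 - (x + 1 / N)) := by rw [hkx]; field_simp; ring
      rw [e1, ← mul_add, mul_left_comm, mul_div_mul_left _ _ hn0.ne']
      ring
    have ha : 0 ≤ 1 - (x + 1 / (N : ℝ)) := by linarith
    have hE := exp_pos (2 * tauFun J h (x + 1 / N))
    have hE0 := exp_pos (2 * tauFun J h x)
    have hshift := abs_div_add_exp_tauFun_sub_le (h := h) hJ hx0 hx1
      (d := 1 / (N : ℝ)) (by rw [abs_of_pos hinv]; exact hinv1) ha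
    rw [abs_of_pos hinv, ← hB, abs_sub_comm] at hshift
    have hcompl : ∀ a E : ℝ, 0 ≤ a → 0 < E → E / (a + E) = 1 - a / (a + E) := by
      intro a E ha hE
      have : 0 < a + E := by positivity
      field_simp
      ring
    have hdiff : exp (2 * tauFun J h (x + 1 / N)) /
          ((1 - (x + 1 / N)) + exp (2 * tauFun J h (x + 1 / N))) -
        exp (2 * tauFun J h x) / ((1 - x) + exp (2 * tauFun J h x)) =
        (1 - x) / ((1 - x) + exp (2 * tauFun J h x)) -
          (1 - (x + 1 / N)) / ((1 - (x + 1 / N)) + exp (2 * tauFun J h (x + 1 / N))) := by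
      rw [hcompl _ _ ha hE, hcompl _ _ (by linarith) hE0]
      ring
    rw [← hdiff] at hshift
    have hcoef := abs_mul_sub_one_div_sub_sq_le hn' (k := (N : ℝ) - k) (by linarith) (by linarith)
    have e3 : ((N : ℝ) - k) / N = 1 - x := by rw [hx]; field_simp
    rw [e3] at hcoef
    rw [heq]
    refine (abs_mul_sub_mul_le (by positivity) (by nlinarith) (by positivity)
      ((div_le_one (by positivity)).2 (by linarith))).trans ?_
    refine (add_le_add hcoef hshift).trans (le_of_eq ?_)
    ring
  have hsplit : ((k : ℝ) * (k - 1) * downDrift N J h k -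
        ((N : ℝ) - k) * (N - k - 1) * upDrift N J h k) / (N * (N - 1)) - Lone J h ((k : ℝ) / N) =
      2 * ((k : ℝ) * (k - 1) / (N * (N - 1)) * (downDrift N J h k / 2) -
        x ^ 2 * ((1 - x) / ((1 - x) + exp (2 * tauFun J h x)))) -
      2 * (((N : ℝ) - k) * (N - k - 1) / (N * (N - 1)) * (upDrift N J h k / 2) -
        (1 - x) ^ 2 * (exp (2 * tauFun J h x) / ((1 - x) + exp (2 * tauFun J h x)))) := by
    unfold Lone
    rw [← hx]
    ring
  rw [hsplit]
  refine (abs_sub _ _).trans ?_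
  rw [abs_mul, abs_mul, abs_two]
  calc _ ≤ 2 * ((2 + B) / N) + 2 * ((2 + B) / N) := by gcongr
    _ = _ := by ring

/-- First conditional moment of the exchangeable pair for the weighted
Curie–Weiss model: `E[M - M' | σ] = L₁(m(σ)) + R₁(m(σ))` with `|R₁(m)| ≤ K/N` on `[0,1]`,
for a constant `K = K(J,h)` independent of `N`. -/
theorem stmt5 (J h : ℝ) (hJ : 0 ≤ J) :
    ∃ K : ℝ, ∀ N : ℕ, 1 ≤ N →
      ∃ R₁ : ℝ → ℝ,
        (∀ m ∈ Set.Icc (0:ℝ) 1, |R₁ m| ≤ K / N) ∧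
        ∀ σ : Config N, wConf N J h σ ≠ 0 →
          condE2 N J h (fun σ σ' => (Msum σ : ℝ) - (Msum σ' : ℝ)) σ
            = Lone J h (mConf σ) + R₁ (mConf σ) := by
  refine ⟨4 * (2 + (exp (2 * J - 2 * h) + 4 * J * exp (4 * J))), fun N hN => ?_⟩
  have hNpos : (0 : ℝ) < N := by exact_mod_cast hN
  classical
  let G : ℝ → ℝ := fun k => (k * (k - 1) * downDrift N J h k -
    ((N : ℝ) - k) * (N - k - 1) * upDrift N J h k) / (N * (N - 1))
  refine ⟨fun m => if ∃ σ : Config N, mConf σ = m then G (N * m) - Lone J h m else 0, ?_, ?_⟩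
  · intro m _
    beta_reduce
    split_ifs with hm
    · obtain ⟨σ, rfl⟩ := hm
      have hmul : (N : ℝ) * mConf σ = Msum σ := by
        unfold mConf
        field_simp
      rw [hmul]
      exact abs_drift_sub_Lone_le hJ hN (Msum_le σ)
    · rw [abs_zero]
      positivity
  · intro σ hσ
    have hmul : (N : ℝ) * mConf σ = Msum σ := by
      unfold mConf
      field_simp
    simp only [if_pos (⟨σ, rfl⟩ : ∃ σ' : Config N, mConf σ' = mConf σ), hmul]
    rw [condE2_eq hσ]
    ring
end
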